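/- Let M' ⊂ ℂⁿ be a real analytic hypersurface with complex defining equation z̄' = Θ'(w̄', t'), let φ'_k be its morphism of k-jets of Segre varieties with generic rank n + χ'_{M'} for k large, set κ' := n − 1 − χ'_{M'}, and let q' ∈ M' be a point near which φ'_k has locally constant rank n + χ'_{M'}. Then there exists a local holomorphic coordinate system (w', v', z') ∈ ℂ^{n−1−κ'} × ℂ^{κ'} × ℂ vanishing at q' in which M' is defined by an equation of the form z̄' = Θ'(w̄', w', z'), where the real analytic function Θ' is independent of the coordinates (v', v̄'); in particular, near q', M' is biholomorphic to a product M̲' × Δ^{κ'}, where M̲' ⊂ ℂ^{n−κ'} is a hypersurface that is finitely nondegenerate at the corresponding point. -/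

import Mathlib

/-!
Common definitions: CR geometry of real analytic hypersurfaces in `ℂⁿ`,
following J. Merker, "On envelopes of holomorphy of domains with Levi-flat
hats and the reflection principle".

We model `ℂⁿ` with `n = m + 1` as `CS m := (Fin m → ℂ) × ℂ`, with coordinates
`t = (w, z)`; the sup-norm balls of this product are polydiscs.
-/

noncomputable section

open Complex Topology Filter Metric Set

abbrev CS (m : ℕ) : Type := (Fin m → ℂ) × ℂ

section Basic

variable {E F : Type*} [NormedAddCommGroup E] [NormedSpace ℂ E]
  [NormedAddCommGroup F] [NormedSpace ℂ F]

/-- `v` is a real tangent vector to the set `M` at `q`: every real-differentiable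
function vanishing on `M` near `q` has differential annihilating `v`. -/
def TangentAt (M : Set E) (q v : E) : Prop :=
  ∀ ρ : E → ℝ, DifferentiableAt ℝ ρ q → (∀ᶠ z in 𝓝 q, z ∈ M → ρ z = 0) →
    fderiv ℝ ρ q v = 0

/-- `v` is a complex tangent vector to `M` at `q` (i.e. `v ∈ T^c_q M`). -/
def ComplexTangentAt (M : Set E) (q v : E) : Prop :=
  TangentAt M q v ∧ TangentAt M q (Complex.I • v)

/-- `M` is a real analytic real hypersurface: near each of its points it is the
zero set of a real analytic real-valued function with nonvanishing differential. -/
def IsRealAnalyticHypersurface (M : Set E) : Prop :=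
  M.Nonempty ∧ ∀ p ∈ M, ∃ (U : Set E) (ρ : E → ℝ), IsOpen U ∧ p ∈ U ∧
    AnalyticOnNhd ℝ ρ U ∧ fderiv ℝ ρ p ≠ 0 ∧ M ∩ U = {z ∈ U | ρ z = 0}

/-- A set `N ⊆ E` is generic in `E`: `T_q N + i T_q N = E` at each `q ∈ N`. -/
def IsGenericSet (N : Set E) : Prop :=
  ∀ q ∈ N, ∀ v : E, ∃ a b : E, TangentAt N q a ∧ TangentAt N q b ∧
    v = a + Complex.I • b

/-- The antiholomorphic part `∂̄f(q)(v)` of the real differential of `f` at `q`. -/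
def antiCDeriv (f : E → ℂ) (q v : E) : ℂ :=
  (fderiv ℝ f q v + Complex.I * fderiv ℝ f q (Complex.I • v)) / 2

/-- `f` is a CR function of class `C^k` on the hypersurface `M`: locally it has
`C^k` extensions whose antiholomorphic differential annihilates the complex
tangent spaces of `M`. -/
def IsCRFunctionOn (k : ℕ∞) (M : Set E) (f : E → ℂ) : Prop :=
  ∀ p ∈ M, ∃ (U : Set E) (g : E → ℂ), IsOpen U ∧ p ∈ U ∧
    ContDiffOn ℝ k g U ∧ (∀ z ∈ M ∩ U, g z = f z) ∧
    ∀ q ∈ M ∩ U, ∀ v : E, ComplexTangentAt M q v → antiCDeriv g q v = 0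

/-- `h` is a CR mapping of class `C^k` from `M` to `M'`. -/
def IsCRMapOn (k : ℕ∞) (M : Set E) (M' : Set F) (h : E → F) : Prop :=
  Set.MapsTo h M M' ∧ ∀ ℓ : F →L[ℂ] ℂ, IsCRFunctionOn k M fun z => ℓ (h z)

/-- `h` is a CR diffeomorphism of class `C^k` from `M` onto `M'`. -/
def IsCRDiffeoOn (k : ℕ∞) (M : Set E) (M' : Set F) (h : E → F) : Prop :=
  IsCRMapOn k M M' h ∧ Set.BijOn h M M' ∧
    ∃ g : F → E, IsCRMapOn k M' M g ∧ ∀ z ∈ M, g (h z) = z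

/-- `f` is a CR function of class `C^{1,α}` on `M`. -/
def IsCRFunctionC1HolderOn (α : NNReal) (M : Set E) (f : E → ℂ) : Prop :=
  ∀ p ∈ M, ∃ (U : Set E) (g : E → ℂ), IsOpen U ∧ p ∈ U ∧
    ContDiffOn ℝ 1 g U ∧
    (∃ C : NNReal, HolderOnWith C α (fderivWithin ℝ g U) U) ∧
    (∀ z ∈ M ∩ U, g z = f z) ∧
    ∀ q ∈ M ∩ U, ∀ v : E, ComplexTangentAt M q v → antiCDeriv g q v = 0

/-- `h` is a CR mapping of class `C^{1,α}` from `M` to `M'`. -/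
def IsCRMapC1HolderOn (α : NNReal) (M : Set E) (M' : Set F) (h : E → F) : Prop :=
  Set.MapsTo h M M' ∧ ∀ ℓ : F →L[ℂ] ℂ, IsCRFunctionC1HolderOn α M fun z => ℓ (h z)

/-- `h` is a CR diffeomorphism of class `C^{1,α}` from `M` onto `M'`. -/
def IsCRDiffeoC1HolderOn (α : NNReal) (M : Set E) (M' : Set F) (h : E → F) : Prop :=
  IsCRMapC1HolderOn α M M' h ∧ Set.BijOn h M M' ∧
    ∃ g : F → E, IsCRMapC1HolderOn α M' M g ∧ ∀ z ∈ M, g (h z) = z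

/-- There is a germ of a (possibly singular) complex hypersurface through `q`
contained in `M`. -/
def HasComplexHypersurfaceGermIn (M : Set E) (q : E) : Prop :=
  ∃ (U : Set E) (f : E → ℂ), IsOpen U ∧ q ∈ U ∧ DifferentiableOn ℂ f U ∧
    f q = 0 ∧ ¬ (∀ᶠ z in 𝓝 q, f z = 0) ∧ {z ∈ U | f z = 0} ⊆ M

/-- `M` is minimal in the sense of Tumanov at `q`: no germ of a complex
hypersurface through `q` is contained in `M`. -/
def MinimalAt (M : Set E) (q : E) : Prop := ¬ HasComplexHypersurfaceGermIn M q

/-- `M` is holomorphically nondegenerate: there is no holomorphic vector field,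
defined and not identically zero near some point of `M`, tangent to `M`. -/
def HolomorphicallyNondegenerate (M : Set E) : Prop :=
  ¬ ∃ (U : Set E) (X : E → E) (q : E), IsOpen U ∧ q ∈ M ∩ U ∧
      DifferentiableOn ℂ X U ∧ ¬ (∀ᶠ z in 𝓝 q, X z = 0) ∧
      ∀ z ∈ M ∩ U, ComplexTangentAt M z (X z)

/-- There exist `d` holomorphic vector fields tangent to `M`, defined near some
point of `M` and linearly independent at that (generic) point. -/
def HolDegDegreeGE (M : Set E) (d : ℕ) : Prop :=
  ∃ (U : Set E) (X : Fin d → E → E) (q : E), IsOpen U ∧ q ∈ M ∩ U ∧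
    (∀ i, DifferentiableOn ℂ (X i) U) ∧
    (∀ i, ∀ z ∈ M ∩ U, ComplexTangentAt M z (X i z)) ∧
    LinearIndependent ℂ fun i => X i q

/-- The holomorphic degeneracy degree of `M` equals `κ`. -/
def HolDegDegree (M : Set E) (κ : ℕ) : Prop :=
  HolDegDegreeGE M κ ∧ ¬ HolDegDegreeGE M (κ + 1)

/-- Near `b`, the set `A` is a complex submanifold of complex codimension `c`. -/
def IsComplexSubmanifoldAt (A : Set E) (b : E) (c : ℕ) : Prop :=
  ∃ (W : Set E) (f : E → Fin c → ℂ), IsOpen W ∧ b ∈ W ∧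
    DifferentiableOn ℂ f W ∧ A ∩ W = {z ∈ W | f z = 0} ∧
    Function.Surjective ⇑(fderiv ℂ f b)

/-- `A` is a closed complex analytic subset of the open set `Ω`. -/
def IsAnalyticSubsetOf (Ω A : Set E) : Prop :=
  A ⊆ Ω ∧ closure A ∩ Ω ⊆ A ∧
    ∀ a ∈ Ω, ∃ (W : Set E) (N : ℕ) (f : E → Fin N → ℂ), IsOpen W ∧ a ∈ W ∧
      W ⊆ Ω ∧ DifferentiableOn ℂ f W ∧ A ∩ W = {z ∈ W | f z = 0}

/-- `A` is a complex analytic subset of `Ω` of pure complex codimension `c`: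
its regular points are dense in it, and they all have codimension `c`. -/
def IsPureCodimAnalyticSubsetOf (Ω A : Set E) (c : ℕ) : Prop :=
  IsAnalyticSubsetOf Ω A ∧
  (∀ a ∈ A, ∀ V ∈ 𝓝 a, ∃ b ∈ A ∩ V, IsComplexSubmanifoldAt A b c) ∧
  (∀ b ∈ A, ∀ c' : ℕ, IsComplexSubmanifoldAt A b c' → c' = c)

/-- `S` is a `C^∞`-smooth real hypersurface of the open set `Ω`. -/
def IsSmoothHypersurfaceIn (Ω S : Set E) : Prop :=
  S ⊆ Ω ∧ ∀ q ∈ S, ∃ (U : Set E) (ρ : E → ℝ), IsOpen U ∧ q ∈ U ∧ U ⊆ Ω ∧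
    ContDiffOn ℝ (⊤ : ℕ∞) ρ U ∧ (∀ z ∈ U, fderiv ℝ ρ z ≠ 0) ∧
    S ∩ U = {z ∈ U | ρ z = 0}

/-- A smooth real hypersurface is Levi-flat iff it is foliated by complex
hypersurfaces, i.e. through each of its points there passes a germ of a
complex hypersurface contained in it. -/
def IsLeviFlat (S : Set E) : Prop :=
  ∀ q ∈ S, HasComplexHypersurfaceGermIn S q

/-- `f` is of class `C^{1,β}` on `s`. -/
def IsC1HolderOn {X Y : Type*} [NormedAddCommGroup X] [NormedSpace ℝ X]
    [NormedAddCommGroup Y] [NormedSpace ℝ Y] (β : NNReal) (f : X → Y)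
    (s : Set X) : Prop :=
  ContDiffOn ℝ 1 f s ∧ ∃ C : NNReal, HolderOnWith C β (fderivWithin ℝ f s) s

/-- A continuous CR function on a smooth hypersurface `S`: continuous on `S`
and locally a uniform limit on `S` of holomorphic functions
(Baouendi–Trèves characterization). -/
def ContinuousCRFunctionOn (S : Set E) (ψ : E → ℂ) : Prop :=
  ContinuousOn ψ S ∧ ∀ p ∈ S, ∃ U : Set E, IsOpen U ∧ p ∈ U ∧
    ∃ Fs : ℕ → E → ℂ, (∀ k, DifferentiableOn ℂ (Fs k) U) ∧
      TendstoUniformlyOn (fun k => Fs k) ψ atTop (S ∩ U)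

end Basic

section Series

variable {m : ℕ}

/-- Total degree of a multiindex `β ∈ ℕ^m`. -/
def mdeg (β : Fin m → ℕ) : ℕ := ∑ i, β i

/-- Monomial `w^β`. -/
def mpow (w : Fin m → ℂ) (β : Fin m → ℕ) : ℂ := ∏ i, w i ^ β i

/-- Componentwise conjugation of `w ∈ ℂ^m`. -/
def conjW (w : Fin m → ℂ) : Fin m → ℂ := fun i => starRingEnd ℂ (w i)

/-- Componentwise conjugation on `ℂ^{m+1}`. -/
def conjCS (t : CS m) : CS m := (conjW t.1, starRingEnd ℂ t.2)

/-- The series `Θ(ζ, t) = Σ_β ζ^β Θ_β(t)`. -/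
def ThetaSum (Θ : (Fin m → ℕ) → CS m → ℂ) (ζ : Fin m → ℂ) (t : CS m) : ℂ :=
  ∑' β : Fin m → ℕ, mpow ζ β * Θ β t

/-- The conjugate series `Θ̄(w, τ) = Σ_β w^β conj(Θ_β(τ̄))`. -/
def ThetaBar (Θ : (Fin m → ℕ) → CS m → ℂ) (w : Fin m → ℂ) (τ : CS m) : ℂ :=
  ∑' β : Fin m → ℕ, mpow w β * starRingEnd ℂ (Θ β (conjCS τ))

/-- Defining data for a hypersurface through `0`: a family of coefficient
functions `Θ_β`, a radius `r` and a constant `C`. -/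
structure DefData (m : ℕ) where
  Θ : (Fin m → ℕ) → CS m → ℂ
  r : ℝ
  C : ℝ

/-- `d` is a normally convergent complex defining series for `M` near the
origin, i.e. in suitable holomorphic coordinates vanishing at the reference
point, `M = {(w, z) : z̄ = Θ(w̄, (w, z)) = Σ_β w̄^β Θ_β(w, z)}`, where the
coefficients are holomorphic on the polydisc of radius `2r` and satisfy the
normal-convergence Cauchy estimates `|Θ_β| ≤ C / (2r)^{|β|}` there, and the
series vanishes at the origin. -/
def DefData.IsDefiningSeriesOf (d : DefData m) (M : Set (CS m)) : Prop :=
  0 < d.r ∧ 0 < d.C ∧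
  (∀ β, DifferentiableOn ℂ (d.Θ β) (ball (0 : CS m) (2 * d.r))) ∧
  (∀ β, ∀ t ∈ ball (0 : CS m) (2 * d.r), ‖d.Θ β t‖ ≤ d.C / (2 * d.r) ^ mdeg β) ∧
  d.Θ 0 0 = 0 ∧
  ∀ t ∈ ball (0 : CS m) d.r,
    (t ∈ M ↔ starRingEnd ℂ t.2 = ThetaSum d.Θ (conjW t.1) t)

/-- The Segre variety `S_{q̄}` of a point `q`, inside the polydisc of radius
`r`: `S_{q̄} = {(w, z) : z = Σ_β w^β conj(Θ_β(q))}`. -/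
def segreVariety (Θ : (Fin m → ℕ) → CS m → ℂ) (r : ℝ) (q : CS m) : Set (CS m) :=
  {t ∈ ball (0 : CS m) r |
    t.2 = ∑' β : Fin m → ℕ, mpow t.1 β * starRingEnd ℂ (Θ β q)}

/-- The reflection function `R'_h(t, ν̄') = μ̄' - Σ_β λ̄'^β Θ'_β(h(t))` extends
holomorphically to a neighborhood of `(p, p̄')` in `ℂⁿ × ℂⁿ`. -/
def ReflectionExtendsAt (Θ : (Fin m → ℕ) → CS m → ℂ) (h : CS m → CS m)
    (M : Set (CS m)) (p p' : CS m) : Prop :=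
  ∃ r > (0 : ℝ), ∃ R : CS m × CS m → ℂ,
    DifferentiableOn ℂ R (ball p r ×ˢ ball (conjCS p') r) ∧
    ∀ t ∈ M ∩ ball p r, ∀ ν ∈ ball (conjCS p') r,
      R (t, ν) = ν.2 - ∑' β : Fin m → ℕ, mpow ν.1 β * Θ β (h t)

/-- All the components `Θ_β ∘ h` of the reflection function extend
holomorphically to a common neighborhood of `q`, with uniform Cauchy
estimates `|Θ_β(h(t))| < C^{|β|+1}`; i.e. the reflection function is real
analytic at `q`. -/
def ReflectionAnalyticAt (Θ : (Fin m → ℕ) → CS m → ℂ) (h : CS m → CS m)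
    (M : Set (CS m)) (q : CS m) : Prop :=
  ∃ r C : ℝ, 0 < r ∧ 0 < C ∧ ∃ φ : (Fin m → ℕ) → CS m → ℂ,
    (∀ β, DifferentiableOn ℂ (φ β) (ball q r)) ∧
    (∀ β, ∀ t ∈ M ∩ ball q r, φ β t = Θ β (h t)) ∧
    ∀ β, ∀ t ∈ ball q r, ‖φ β t‖ < C ^ (mdeg β + 1)

end Series

section Jets

variable {m : ℕ}

/-- Partial derivative in the direction of the `i`-th `w`-coordinate. -/
def pderivW (i : Fin m) (f : CS m → ℂ) : CS m → ℂ :=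
  fun t => fderiv ℂ f t (Pi.single i 1, 0)

def pderivList : List (Fin m) → (CS m → ℂ) → CS m → ℂ
  | [], f => f
  | i :: L, f => pderivW i (pderivList L f)

def indexList (β : Fin m → ℕ) : List (Fin m) :=
  (List.finRange m).flatMap fun i => List.replicate (β i) i

/-- The iterated partial derivative `∂_w^β f`. -/
def pderivMulti (β : Fin m → ℕ) (f : CS m → ℂ) : CS m → ℂ :=
  pderivList (indexList β) f

/-- The morphism of `k`-jets of Segre varieties
`φ'_k : (t', τ') ↦ (t', (∂^β_{w'}[z' − Θ̄'(w', τ')](t'))_{|β| ≤ k})`, written in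
the holomorphic parametrization `(t, ζ) ↦ (t, (ζ, Θ(ζ, t)))` of the extrinsic
complexification `M^c`. -/
def segreJetMap (Θ : (Fin m → ℕ) → CS m → ℂ) (k : ℕ) :
    CS m × (Fin m → ℂ) → CS m × ((Fin m → Fin (k + 1)) → ℂ) :=
  fun p =>
    (p.1, fun β =>
      if mdeg (fun i => (β i : ℕ)) ≤ k then
        pderivMulti (fun i => (β i : ℕ))
          (fun s => s.2 - ThetaBar Θ s.1 (p.2, ThetaSum Θ p.2 p.1)) p.1
      else 0)

/-- The rank of the differential of a map at a point. -/
def mapRankAt {X Y : Type*} [NormedAddCommGroup X] [NormedSpace ℂ X]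
    [NormedAddCommGroup Y] [NormedSpace ℂ Y] (f : X → Y) (p : X) : ℕ :=
  Module.finrank ℂ (LinearMap.range (fderiv ℂ f p).toLinearMap)

/-- Parameter domain for the complexification. -/
def segreDomain (m : ℕ) (r : ℝ) : Set (CS m × (Fin m → ℂ)) :=
  {p | ‖p.1‖ < r ∧ ‖p.2‖ < r}

/-- The morphism of `k`-jets of Segre varieties has generic rank `ρ`. -/
def SegreGenericRank (Θ : (Fin m → ℕ) → CS m → ℂ) (r : ℝ) (k ρ : ℕ) : Prop :=
  (∀ p ∈ segreDomain m r, mapRankAt (segreJetMap Θ k) p ≤ ρ) ∧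
  ∃ p ∈ segreDomain m r, mapRankAt (segreJetMap Θ k) p = ρ

/-- The `k`-jet morphism has locally constant rank `ρ` in a neighborhood of the
point of the complexification corresponding to `(q, q̄)`. -/
def SegreConstRankNear (Θ : (Fin m → ℕ) → CS m → ℂ) (k ρ : ℕ) (q : CS m) : Prop :=
  ∀ᶠ p in 𝓝 (q, conjW q.1), mapRankAt (segreJetMap Θ k) p = ρ

/-- Normal form of a defining series with respect to the splitting
`t' = (w', v', z') ∈ ℂ^a × ℂ^{m-a} × ℂ`: the series involves no `v̄'` and its
coefficients are independent of `v'`. -/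
def NormalFormSeries (a : ℕ) (Θ : (Fin m → ℕ) → CS m → ℂ) : Prop :=
  (∀ β : Fin m → ℕ, (∃ i : Fin m, a ≤ (i : ℕ) ∧ β i ≠ 0) → Θ β = 0) ∧
  ∀ β, ∀ s t : CS m, (∀ i : Fin m, (i : ℕ) < a → s.1 i = t.1 i) → s.2 = t.2 →
    Θ β s = Θ β t

def extendIdx (m a : ℕ) (β : Fin a → ℕ) : Fin m → ℕ :=
  fun i => if h : (i : ℕ) < a then β ⟨i, h⟩ else 0

def embedCS (m a : ℕ) (t : CS a) : CS m :=
  ((fun i => if h : (i : ℕ) < a then t.1 ⟨i, h⟩ else 0), t.2)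

/-- The defining series of the reduced hypersurface `M̲' ⊆ ℂ^{a+1}` underlying
a series in normal form. -/
def reducedSeries (m a : ℕ) (Θ : (Fin m → ℕ) → CS m → ℂ) :
    (Fin a → ℕ) → CS a → ℂ :=
  fun β t => Θ (extendIdx m a β) (embedCS m a t)

end Jets

set_option linter.unusedSectionVars false

section Toolkit

variable {E F : Type*} [NormedAddCommGroup E] [NormedSpace ℂ E]
  [NormedAddCommGroup F] [NormedSpace ℂ F]

/-- Restriction of a map to a complex line: differentiability. -/
lemma line_differentiableOn {f : E → F} {x : E} {R : ℝ}
    (hf : DifferentiableOn ℂ f (ball x R)) {v : E} {ρ : ℝ} (hρ : ρ * ‖v‖ ≤ R) :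
    DifferentiableOn ℂ (fun l : ℂ => f (x + l • v)) (ball 0 ρ) := by
  rcases eq_or_ne v 0 with rfl | hv
  · simp
  have hv' : 0 < ‖v‖ := norm_pos_iff.2 hv
  refine hf.comp (f := fun l : ℂ => x + l • v) (by fun_prop) ?_
  intro l hl
  rw [mem_ball_zero_iff] at hl
  rw [mem_ball_iff_norm, add_sub_cancel_left, norm_smul]
  exact lt_of_lt_of_le (mul_lt_mul_of_pos_right hl hv') hρ

lemma line_hasDerivAt {f : E → F} {x : E} {v : E} {l : ℂ}
    (hf : DifferentiableAt ℂ f (x + l • v)) :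
    HasDerivAt (fun l : ℂ => f (x + l • v)) (fderiv ℂ f (x + l • v) v) l := by
  have h1 : HasDerivAt (fun l : ℂ => x + l • v) v l := by
    simpa using ((hasDerivAt_id l).smul_const v).const_add x
  exact hf.hasFDerivAt.comp_hasDerivAt l h1

/-- Cauchy's estimate for the differential. -/
lemma norm_fderiv_le_cauchy {f : E → F} {x : E} {R C : ℝ} (hR : 0 < R)
    (hf : DifferentiableOn ℂ f (ball x R)) (hC : ∀ y ∈ ball x R, ‖f y‖ ≤ C) :
    ‖fderiv ℂ f x‖ ≤ 2 * C / R := by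
  have hC0 : 0 ≤ C := (norm_nonneg _).trans (hC x (mem_ball_self hR))
  refine ContinuousLinearMap.opNorm_le_bound _ (by positivity) fun v => ?_
  rcases eq_or_ne v 0 with rfl | hv
  · simp
  have hv' : 0 < ‖v‖ := norm_pos_iff.2 hv
  have hx : DifferentiableAt ℂ f (x + (0 : ℂ) • v) := by
    simpa using hf.differentiableAt (ball_mem_nhds x hR)
  have h1 := (line_hasDerivAt hx).deriv
  simp only [zero_smul, add_zero] at h1
  rw [← h1]
  have hρ : 0 < R / (2 * ‖v‖) := by positivity
  have hd : DiffContOnCl ℂ (fun l : ℂ => f (x + l • v)) (ball 0 (R / (2 * ‖v‖))) := by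
    refine DifferentiableOn.diffContOnCl ?_
    refine (line_differentiableOn (ρ := R / ‖v‖) hf (by field_simp; rfl)).mono ?_
    rw [closure_ball _ hρ.ne']
    refine closedBall_subset_ball ?_
    rw [div_lt_div_iff₀ (by positivity) hv']
    nlinarith [mul_pos hR hv']
  refine (Complex.norm_deriv_le_of_forall_mem_sphere_norm_le (C := C) hρ hd ?_).trans ?_
  · intro z hz
    apply hC
    rw [mem_sphere_zero_iff_norm] at hz
    rw [mem_ball_iff_norm, add_sub_cancel_left, norm_smul, hz]
    field_simp
    norm_num
  · apply le_of_eq; field_simp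

/-- A directional derivative of a holomorphic map is holomorphic. -/
lemma differentiableOn_fderiv_apply [FiniteDimensional ℂ E] [FiniteDimensional ℂ F]
    {f : E → F} {U : Set E} (hU : IsOpen U) (hf : DifferentiableOn ℂ f U) (v : E) :
    DifferentiableOn ℂ (fun x => fderiv ℂ f x v) U := by
  intro x₀ hx₀
  apply DifferentiableAt.differentiableWithinAt
  borelize E
  have : ProperSpace E := FiniteDimensional.proper ℂ E
  have : ProperSpace F := FiniteDimensional.proper ℂ F
  have : CompleteSpace F := FiniteDimensional.complete ℂ F
  have : ProperSpace (E →L[ℂ] F) := FiniteDimensional.proper ℂ _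
  borelize (E →L[ℂ] F)
  borelize F
  -- boundedness near x₀
  obtain ⟨ε, hε, hεU, hεC⟩ : ∃ ε > 0, ball x₀ ε ⊆ U ∧ ∀ y ∈ ball x₀ ε, ‖f y‖ ≤ ‖f x₀‖ + 1 := by
    have hc : ContinuousAt f x₀ := (hf.differentiableAt (hU.mem_nhds hx₀)).continuousAt
    have h1 : ∀ᶠ y in 𝓝 x₀, ‖f y‖ < ‖f x₀‖ + 1 :=
      hc.norm.eventually_lt continuousAt_const (by simp)
    obtain ⟨ε, hε, h⟩ := Metric.eventually_nhds_iff_ball.1 (h1.and (hU.mem_nhds hx₀))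
    exact ⟨ε, hε, fun y hy => (h y hy).2, fun y hy => (h y hy).1.le⟩
  set C := ‖f x₀‖ + 1 with hCdef
  obtain ⟨ρ, hρ, hρv⟩ : ∃ ρ > 0, ρ * ‖v‖ ≤ ε / 4 := by
    refine ⟨ε / 4 / (‖v‖ + 1), by positivity, ?_⟩
    rw [div_mul_eq_mul_div, div_le_iff₀ (by positivity)]
    nlinarith [norm_nonneg v]
  have hmem : ∀ x ∈ ball x₀ (ε / 4), ∀ l : ℂ, ‖l‖ ≤ ρ → x + l • v ∈ ball x₀ (ε / 2) := by
    intro x hx l hl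
    rw [mem_ball_iff_norm] at hx ⊢
    calc ‖x + l • v - x₀‖ = ‖(x - x₀) + l • v‖ := by congr 1; abel
      _ ≤ ‖x - x₀‖ + ‖l • v‖ := norm_add_le _ _
      _ = ‖x - x₀‖ + ‖l‖ * ‖v‖ := by rw [norm_smul]
      _ ≤ ‖x - x₀‖ + ρ * ‖v‖ := by gcongr
      _ < ε / 2 := by linarith
  have hfd : ∀ y ∈ ball x₀ ε, DifferentiableAt ℂ f y := fun y hy =>
    hf.differentiableAt (hU.mem_nhds (hεU hy))
  -- integral formula
  set k : ℝ → ℂ := fun θ => deriv (circleMap 0 ρ) θ * ((circleMap 0 ρ θ) ^ 2)⁻¹ with hk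
  set μ : MeasureTheory.Measure ℝ := MeasureTheory.volume.restrict (Ioc 0 (2 * Real.pi)) with hμ
  have hkc : Continuous k := by
    rw [hk]
    have : ∀ θ, circleMap 0 ρ θ ^ 2 ≠ 0 := fun θ => by
      simp [hρ.ne']
    simp only [deriv_circleMap]
    fun_prop (disch := assumption)
  have hkn : ∀ θ, ‖k θ‖ = ρ⁻¹ := by
    intro θ
    simp only [hk, deriv_circleMap, norm_mul, norm_inv, norm_pow, norm_circleMap_zero,
      Complex.norm_I, abs_of_pos hρ]
    field_simp
  have hform : ∀ x ∈ ball x₀ (ε / 4), fderiv ℂ f x v =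
      (2 * Real.pi * I : ℂ)⁻¹ • ∫ θ, k θ • f (x + circleMap 0 ρ θ • v) ∂μ := by
    intro x hx
    have hx' : DifferentiableAt ℂ f (x + (0 : ℂ) • v) := by
      have := hmem x hx 0 (by simpa using hρ.le)
      exact hfd _ (ball_subset_ball (by linarith) this)
    have h1 := (line_hasDerivAt hx').deriv
    simp only [zero_smul, add_zero] at h1
    rw [← h1]
    have hd : DiffContOnCl ℂ (fun l : ℂ => f (x + l • v)) (ball 0 ρ) := by
      refine DifferentiableOn.diffContOnCl ?_
      rw [closure_ball _ hρ.ne']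
      intro l hl
      have := hmem x hx l (by simpa using hl)
      exact (line_hasDerivAt (hfd _ (ball_subset_ball (by linarith) this))).differentiableAt.differentiableWithinAt
    have h2 := hd.deriv_eq_smul_circleIntegral hρ
    rw [eq_inv_smul_iff₀ (by simp [Real.pi_ne_zero]), ← h2, circleIntegral,
      intervalIntegral.integral_of_le (by positivity)]
    simp only [hk, sub_zero, one_div, smul_smul]
    rfl
  have hev : (fun x => fderiv ℂ f x v) =ᶠ[𝓝 x₀]
      fun x => (2 * Real.pi * I : ℂ)⁻¹ • ∫ θ, k θ • f (x + circleMap 0 ρ θ • v) ∂μ := by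
    filter_upwards [ball_mem_nhds x₀ (show 0 < ε / 4 by positivity)] with x hx using hform x hx
  refine DifferentiableAt.congr_of_eventuallyEq ?_ hev
  apply DifferentiableAt.const_smul
  have hcont : ∀ x ∈ ball x₀ (ε / 4), Continuous fun θ => k θ • f (x + circleMap 0 ρ θ • v) := by
    intro x hx
    refine hkc.smul ?_
    rw [continuous_iff_continuousAt]
    intro θ
    have h1 := hmem x hx (circleMap 0 ρ θ) (by simp [abs_of_pos hρ])
    have h2 := (hfd _ (ball_subset_ball (by linarith) h1)).continuousAt
    exact ContinuousAt.comp (f := fun θ => x + circleMap 0 ρ θ • v) h2 (by fun_prop)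
  have hfin : MeasureTheory.IsFiniteMeasure μ := by
    rw [hμ]; infer_instance
  have main := hasFDerivAt_integral_of_dominated_of_fderiv_le (𝕜 := ℂ) (μ := μ) (x₀ := x₀)
    (F := fun x θ => k θ • f (x + circleMap 0 ρ θ • v))
    (F' := fun x θ => k θ • fderiv ℂ f (x + circleMap 0 ρ θ • v))
    (bound := fun _ => ρ⁻¹ * (2 * C / (ε / 2)))
    (ball_mem_nhds x₀ (show 0 < ε / 4 by positivity)) ?_ ?_ ?_ ?_ ?_ ?_
  · exact main.differentiableAt
  · filter_upwards [ball_mem_nhds x₀ (show 0 < ε / 4 by positivity)] with x hx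
    exact (hcont x hx).aestronglyMeasurable
  · have := (hcont x₀ (mem_ball_self (by positivity))).integrableOn_Icc (μ := MeasureTheory.volume)
      (a := 0) (b := 2 * Real.pi)
    exact this.mono_set Ioc_subset_Icc_self
  · apply Measurable.aestronglyMeasurable
    refine hkc.measurable.smul ?_
    exact (measurable_fderiv ℂ f).comp (by fun_prop)
  · refine Eventually.of_forall fun θ x hx => ?_
    rw [norm_smul, hkn]
    have h1 := hmem x hx (circleMap 0 ρ θ) (by simp [abs_of_pos hρ])
    gcongr
    have hsub : ball (x + circleMap 0 ρ θ • v) (ε / 2) ⊆ ball x₀ ε := by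
      apply ball_subset_ball'
      rw [mem_ball] at h1
      linarith
    exact norm_fderiv_le_cauchy (by positivity)
      (fun y hy => (hfd y (hsub hy)).differentiableWithinAt) fun y hy => hεC y (hsub hy)
  · exact MeasureTheory.integrable_const _
  · refine Eventually.of_forall fun θ x hx => ?_
    have h1 := hmem x hx (circleMap 0 ρ θ) (by simp [abs_of_pos hρ])
    have h2 := (hfd _ (ball_subset_ball (by linarith) h1)).hasFDerivAt
    exact ((hasFDerivAt_comp_add_right _).2 h2).const_smul (k θ)

end Toolkit

section Toolkit2

variable {E F : Type} [NormedAddCommGroup E] [NormedSpace ℂ E] [FiniteDimensional ℂ E]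
  [NormedAddCommGroup F] [NormedSpace ℂ F] [FiniteDimensional ℂ F]

lemma differentiableOn_fderiv {f : E → F} {U : Set E} (hU : IsOpen U)
    (hf : DifferentiableOn ℂ f U) : DifferentiableOn ℂ (fderiv ℂ f) U := by
  have : CompleteSpace ℂ := inferInstance
  let b := Module.finBasis ℂ E
  -- the linear map sending a tuple to the CLM
  let T : (Fin (Module.finrank ℂ E) → F) →ₗ[ℂ] (E →L[ℂ] F) :=
    (LinearMap.toContinuousLinearMap : (E →ₗ[ℂ] F) ≃ₗ[ℂ] (E →L[ℂ] F)).toLinearMap ∘ₗ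
      (b.constr ℂ : (Fin (Module.finrank ℂ E) → F) ≃ₗ[ℂ] (E →ₗ[ℂ] F)).toLinearMap
  have hT : ∀ A : E →L[ℂ] F, T (fun i => A (b i)) = A := by
    intro A
    ext x
    have : (b.constr ℂ fun i => A (b i)) = (A : E →ₗ[ℂ] F) := by
      apply b.ext; intro i; simp
    simp [T, this]
  have h1 : fderiv ℂ f = fun x => T.toContinuousLinearMap (fun i => fderiv ℂ f x (b i)) := by
    funext x; exact (hT _).symm
  rw [h1]
  refine T.toContinuousLinearMap.differentiable.comp_differentiableOn ?_
  rw [differentiableOn_pi]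
  exact fun i => differentiableOn_fderiv_apply hU hf (b i)

lemma contDiffOn_of_diff {f : E → F} {U : Set E} (hU : IsOpen U)
    (hf : DifferentiableOn ℂ f U) (n : ℕ) : ContDiffOn ℂ n f U := by
  induction n generalizing F with
  | zero => exact contDiffOn_zero.2 hf.continuousOn
  | succ n ih =>
    have := (contDiffOn_succ_iff_fderiv_of_isOpen (𝕜 := ℂ) (f := f) (n := n) hU).2
      ⟨hf, by simp, ih (differentiableOn_fderiv hU hf)⟩
    exact_mod_cast this

lemma contDiffAt_of_diff {f : E → F} {U : Set E} (hU : IsOpen U)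
    (hf : DifferentiableOn ℂ f U) (n : ℕ) {x : E} (hx : x ∈ U) : ContDiffAt ℂ n f x :=
  (contDiffOn_of_diff hU hf n).contDiffAt (hU.mem_nhds hx)

lemma contDiffAt_of_eventually {f : E → F} {x : E}
    (hf : ∀ᶠ y in 𝓝 x, DifferentiableAt ℂ f y) (n : ℕ) : ContDiffAt ℂ n f x := by
  obtain ⟨U, h, hU, hx⟩ := _root_.eventually_nhds_iff.1 hf
  exact contDiffAt_of_diff hU (fun y hy => (h y hy).differentiableWithinAt) n hx

/-- Iterated directional derivatives along a list of vectors. -/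
def dl : List E → (E → ℂ) → E → ℂ
  | [], f => f
  | v :: L, f => fun x => fderiv ℂ (dl L f) x v

@[simp] lemma dl_nil (f : E → ℂ) : dl [] f = f := rfl
lemma dl_cons (v : E) (L : List E) (f : E → ℂ) :
    dl (v :: L) f = fun x => fderiv ℂ (dl L f) x v := rfl

lemma dl_diff {U : Set E} (hU : IsOpen U) {f : E → ℂ} (hf : DifferentiableOn ℂ f U)
    (L : List E) : DifferentiableOn ℂ (dl L f) U := by
  induction L with
  | nil => exact hf
  | cons v L ih => exact differentiableOn_fderiv_apply hU ih v

lemma dl_append (L L' : List E) (f : E → ℂ) : dl (L ++ L') f = dl L (dl L' f) := by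
  induction L with
  | nil => rfl
  | cons v L ih => simp [dl_cons, ih]

lemma dl_congr {U : Set E} (hU : IsOpen U) {f g : E → ℂ} (h : EqOn f g U) (L : List E) :
    EqOn (dl L f) (dl L g) U := by
  induction L with
  | nil => exact h
  | cons v L ih =>
    intro x hx
    simp only [dl_cons]
    rw [(ih.eventuallyEq_of_mem (hU.mem_nhds hx)).fderiv_eq]

lemma dl_zero (L : List E) : dl L (fun _ : E => (0 : ℂ)) = fun _ => 0 := by
  induction L with
  | nil => rfl
  | cons v L ih => simp [dl_cons, ih]

lemma dl_eq_zero_of_eventually {f : E → ℂ} {x : E} (h : ∀ᶠ y in 𝓝 x, f y = 0) (L : List E) :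
    dl L f x = 0 := by
  obtain ⟨U, h, hU, hx⟩ := _root_.eventually_nhds_iff.1 h
  have := dl_congr hU (f := f) (g := fun _ => 0) (fun y hy => h y hy) L hx
  rw [this, dl_zero]

lemma dl_perm {U : Set E} (hU : IsOpen U) {f : E → ℂ} (hf : DifferentiableOn ℂ f U)
    {L L' : List E} (h : L.Perm L') : EqOn (dl L f) (dl L' f) U := by
  induction h with
  | nil => exact fun _ _ => rfl
  | cons v _ ih =>
    intro x hx
    simp only [dl_cons]
    rw [(ih.eventuallyEq_of_mem (hU.mem_nhds hx)).fderiv_eq]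
  | swap v w L =>
    intro x hx
    simp only [dl_cons]
    set g := dl L f with hg
    have hgd : DifferentiableOn ℂ g U := dl_diff hU hf L
    have hs : IsSymmSndFDerivAt ℂ g x :=
      (contDiffAt_of_diff hU hgd 2 hx).isSymmSndFDerivAt (by simp)
    have hd := (differentiableOn_fderiv hU hgd).differentiableAt (hU.mem_nhds hx)
    have key : ∀ a b : E, fderiv ℂ (fun y => fderiv ℂ g y a) x b
        = fderiv ℂ (fderiv ℂ g) x b a := by
      intro a b
      rw [fderiv_clm_apply hd (by fun_prop)]
      simp
    rw [key, key]
    exact hs.eq _ _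
  | trans _ _ h1 h2 => exact h1.trans h2

lemma dl_sum {ι : Type*} (s : Finset ι) {U : Set E} (hU : IsOpen U) (f : ι → E → ℂ) (c : ι → ℂ)
    (hf : ∀ i, DifferentiableOn ℂ (f i) U) (L : List E) :
    EqOn (dl L (fun x => ∑ i ∈ s, c i * f i x)) (fun x => ∑ i ∈ s, c i * dl L (f i) x) U := by
  induction L with
  | nil => exact fun _ _ => rfl
  | cons v L ih =>
    intro x hx
    simp only [dl_cons]
    rw [(ih.eventuallyEq_of_mem (hU.mem_nhds hx)).fderiv_eq]
    have hd : ∀ i ∈ s, DifferentiableAt ℂ (fun x => c i * dl L (f i) x) x := fun i _ =>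
      ((dl_diff hU (hf i) L).differentiableAt (hU.mem_nhds hx)).const_mul _
    rw [fderiv_fun_sum hd]
    simp only [_root_.sum_apply]
    refine Finset.sum_congr rfl fun i _ => ?_
    rw [fderiv_const_mul ((dl_diff hU (hf i) L).differentiableAt (hU.mem_nhds hx))]
    rfl

/-- Restriction to a slice. -/
lemma dl_slice {G : Type} [NormedAddCommGroup G] [NormedSpace ℂ G] [FiniteDimensional ℂ G]
    {U : Set (E × G)} (hU : IsOpen U) {f : E × G → ℂ} (hf : DifferentiableOn ℂ f U)
    (L : List E) (y : G) : ∀ x, (x, y) ∈ U →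
    dl L (fun x => f (x, y)) x = dl (L.map fun v => (v, (0 : G))) f (x, y) := by
  induction L with
  | nil => exact fun _ _ => rfl
  | cons v L ih =>
    intro x hx
    simp only [dl_cons, List.map_cons]
    have hc : Continuous fun x : E => (x, y) := by fun_prop
    have h1 : (dl L fun x => f (x, y)) =ᶠ[𝓝 x]
        fun x => dl (L.map fun v => (v, (0 : G))) f (x, y) := by
      filter_upwards [(hU.preimage hc).mem_nhds hx] with x' hx' using ih x' hx'
    rw [h1.fderiv_eq]
    have h2 : HasFDerivAt (fun x : E => (x, y)) (ContinuousLinearMap.inl ℂ E G) x :=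
      hasFDerivAt_prodMk_left x y
    have h3 := ((dl_diff hU hf (L.map fun v => (v, (0 : G)))).differentiableAt
      (hU.mem_nhds hx)).hasFDerivAt.comp x h2
    rw [show (fun x => dl (L.map fun v => (v, (0 : G))) f (x, y))
      = (dl (L.map fun v => (v, (0 : G))) f) ∘ fun x : E => (x, y) from rfl, h3.fderiv]
    simp

lemma iteratedDeriv_line {f : E → ℂ} {x : E} {U : Set E} (hU : IsOpen U)
    (hf : DifferentiableOn ℂ f U) {v : E} (n : ℕ) :
    ∀ l : ℂ, x + l • v ∈ U →
    iteratedDeriv n (fun l : ℂ => f (x + l • v)) l = dl (List.replicate n v) f (x + l • v) := by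
  induction n with
  | zero => intro l _; simp
  | succ n ih =>
    intro l hl
    rw [iteratedDeriv_succ]
    have hc : Continuous fun l : ℂ => x + l • v := by fun_prop
    have h1 : iteratedDeriv n (fun l : ℂ => f (x + l • v)) =ᶠ[𝓝 l]
        fun l => dl (List.replicate n v) f (x + l • v) := by
      filter_upwards [(hU.preimage hc).mem_nhds hl] with l' hl' using ih l' hl'
    rw [h1.deriv_eq, List.replicate_succ, dl_cons]
    exact (line_hasDerivAt ((dl_diff hU hf _).differentiableAt
      (hU.mem_nhds hl))).deriv

/-- Identity theorem along lines. -/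
lemma eq_zero_of_dl {f : E → ℂ} {x : E} {R : ℝ} (hf : DifferentiableOn ℂ f (ball x R))
    (h : ∀ (v : E) (n : ℕ), dl (List.replicate n v) f x = 0) : ∀ y ∈ ball x R, f y = 0 := by
  intro y hy
  have hR : 0 < R := pos_of_mem_ball hy
  obtain ⟨ρ, hρ1, hρ⟩ : ∃ ρ > 1, ρ * ‖y - x‖ ≤ R := by
    rw [mem_ball_iff_norm] at hy
    rcases eq_or_lt_of_le (norm_nonneg (y - x)) with h0 | h0
    · exact ⟨2, by norm_num, by rw [← h0]; simpa using hR.le⟩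
    · exact ⟨R / ‖y - x‖, by rwa [gt_iff_lt, one_lt_div h0], by field_simp; rfl⟩
  have hd := line_differentiableOn hf hρ
  have h1 := Complex.hasSum_taylorSeries_on_ball hd (z := 1) (by simpa using hρ1)
  have h2 : ∀ n, iteratedDeriv n (fun l : ℂ => f (x + l • (y - x))) 0 = 0 := by
    intro n
    rw [iteratedDeriv_line isOpen_ball hf n 0 (by simpa using hR)]
    simpa using h (y - x) n
  simp only [h2] at h1
  simpa using h1.unique (by simp)

lemma eq_zero_of_eventually {f : E → ℂ} {x : E} {R : ℝ} (hf : DifferentiableOn ℂ f (ball x R))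
    (h : ∀ᶠ y in 𝓝 x, f y = 0) : ∀ y ∈ ball x R, f y = 0 :=
  eq_zero_of_dl hf fun _ _ => dl_eq_zero_of_eventually h _

/-- If all iterated derivatives along a spanning family vanish at a point, then so do all of them. -/
lemma dl_replicate_eq_zero {ι : Type*} [Fintype ι] (e : ι → E) (he : ⊤ ≤ Submodule.span ℂ (range e))
    {U : Set E} (hU : IsOpen U) {x : E} (hx : x ∈ U) (v : E) (n : ℕ) :
    ∀ {f : E → ℂ}, DifferentiableOn ℂ f U → (∀ L : List ι, dl (L.map e) f x = 0) →
      dl (List.replicate n v) f x = 0 := by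
  obtain ⟨c, hc⟩ : ∃ c : ι → ℂ, ∑ i, c i • e i = v :=
    (Submodule.mem_span_range_iff_exists_fun ℂ).1 (he trivial)
  induction n with
  | zero => intro f _ h; simpa using h []
  | succ n ih =>
    intro f hf h
    rw [List.replicate_succ', dl_append]
    refine ih (dl_diff hU hf [v]) fun L => ?_
    have h1 : EqOn (dl [v] f) (fun x => ∑ i, c i * dl [e i] f x) U := by
      intro y _
      simp [dl_cons, ← hc]
    rw [dl_congr hU h1 _ hx,
      dl_sum Finset.univ hU (fun i => dl [e i] f) c (fun i => dl_diff hU hf _) _ hx]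
    refine Finset.sum_eq_zero fun i _ => ?_
    rw [← dl_append, show L.map e ++ [e i] = (L ++ [i]).map e by simp, h, mul_zero]

lemma eq_zero_of_dl_basis {ι : Type*} [Fintype ι] (e : ι → E)
    (he : ⊤ ≤ Submodule.span ℂ (range e)) {f : E → ℂ} {x : E} {R : ℝ} (hR : 0 < R)
    (hf : DifferentiableOn ℂ f (ball x R)) (h : ∀ L : List ι, dl (L.map e) f x = 0) :
    ∀ y ∈ ball x R, f y = 0 :=
  eq_zero_of_dl hf fun v n =>
    dl_replicate_eq_zero e he isOpen_ball (mem_ball_self hR) v n hf h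

end Toolkit2

section SeriesTools

variable {m : ℕ}

lemma mdeg_cons (j : ℕ) (β : Fin m → ℕ) : mdeg (Fin.cons j β : Fin (m + 1) → ℕ) = j + mdeg β := by
  simp [mdeg, Fin.sum_univ_succ]

lemma mpow_cons (a : ℂ) (w : Fin m → ℂ) (j : ℕ) (β : Fin m → ℕ) :
    mpow (Fin.cons a w : Fin (m + 1) → ℂ) (Fin.cons j β) = a ^ j * mpow w β := by
  simp [mpow, Fin.prod_univ_succ]

lemma norm_mpow_le (w : Fin m → ℂ) (β : Fin m → ℕ) : ‖mpow w β‖ ≤ ‖w‖ ^ mdeg β := by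
  rw [mpow, mdeg, norm_prod, ← Finset.prod_pow_eq_pow_sum]
  refine Finset.prod_le_prod (fun i _ => norm_nonneg _) fun i _ => ?_
  rw [norm_pow]
  exact pow_le_pow_left₀ (norm_nonneg _) (norm_le_pi_norm w i) _

lemma consSum_iff {A : Type} [AddCommMonoid A] [TopologicalSpace A]
    (f : (Fin (m + 1) → ℕ) → A) (a : A) :
    HasSum (fun p : ℕ × (Fin m → ℕ) => f (Fin.cons p.1 p.2)) a ↔ HasSum f a :=
  (Fin.consEquiv (fun _ : Fin (m + 1) => ℕ)).hasSum_iff (f := f) (a := a)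

lemma summable_geom {q : ℝ} (hq0 : 0 ≤ q) (hq1 : q < 1) :
    Summable fun β : Fin m → ℕ => q ^ mdeg β := by
  induction m with
  | zero => exact (hasSum_unique _).summable
  | succ m ih =>
    have h := (summable_geometric_of_lt_one hq0 hq1).mul_of_nonneg ih
      (fun _ => by positivity) (fun _ => by positivity)
    obtain ⟨a, ha⟩ := h
    refine ⟨a, (consSum_iff _ a).1 ?_⟩
    simpa [mdeg_cons, pow_add] using ha

/-- Normal convergence on polydiscs of radius `R`. -/
def Good (Θ : (Fin m → ℕ) → CS m → ℂ) (R C : ℝ) : Prop :=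
  0 < R ∧ (∀ β, DifferentiableOn ℂ (Θ β) (ball (0 : CS m) R)) ∧
  ∀ β, ∀ t ∈ ball (0 : CS m) R, ‖Θ β t‖ ≤ C / R ^ mdeg β

lemma Good.term_le {Θ : (Fin m → ℕ) → CS m → ℂ} {R C : ℝ} (h : Good Θ R C) (β : Fin m → ℕ)
    {ρ : ℝ} (hρ : ρ ≤ R) {p : (Fin m → ℂ) × CS m} (hp : p ∈ ball 0 ρ) :
    ‖mpow p.1 β * Θ β p.2‖ ≤ C * (ρ / R) ^ mdeg β := by
  obtain ⟨hR, -, hb⟩ := h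
  rw [mem_ball_zero_iff, Prod.norm_def, max_lt_iff] at hp
  have h2 := hb β p.2 (by rw [mem_ball_zero_iff]; linarith)
  have hρ0 : 0 ≤ ρ := (norm_nonneg _).trans hp.1.le
  have h1 : ‖mpow p.1 β‖ ≤ ρ ^ mdeg β := (norm_mpow_le _ _).trans
    (pow_le_pow_left₀ (norm_nonneg _) hp.1.le _)
  rw [norm_mul]
  calc _ ≤ ρ ^ mdeg β * (C / R ^ mdeg β) := by gcongr
    _ = _ := by rw [div_pow]; ring

lemma Good.C_nonneg {Θ : (Fin m → ℕ) → CS m → ℂ} {R C : ℝ} (h : Good Θ R C) : 0 ≤ C := by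
  have := (norm_nonneg _).trans (h.2.2 0 0 (mem_ball_self h.1))
  simpa [mdeg] using this

lemma Good.summable {Θ : (Fin m → ℕ) → CS m → ℂ} {R C : ℝ} (h : Good Θ R C)
    {p : (Fin m → ℂ) × CS m} (hp : p ∈ ball 0 R) :
    Summable fun β => mpow p.1 β * Θ β p.2 := by
  obtain ⟨ρ, h1, h2⟩ := exists_between (mem_ball_zero_iff.1 hp)
  have hρ0 : 0 ≤ ρ := (norm_nonneg _).trans h1.le
  refine Summable.of_norm_bounded
    ((summable_geom (q := ρ / R) (div_nonneg hρ0 h.1.le)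
      ((div_lt_one h.1).2 h2)).mul_left C) fun β => ?_
  exact h.term_le β h2.le (mem_ball_zero_iff.2 h1)

lemma mpow_differentiable (β : Fin m → ℕ) : Differentiable ℂ fun w : Fin m → ℂ => mpow w β := by
  unfold mpow
  fun_prop

lemma Good.diff {Θ : (Fin m → ℕ) → CS m → ℂ} {R C : ℝ} (h : Good Θ R C) :
    DifferentiableOn ℂ (fun p : (Fin m → ℂ) × CS m => ThetaSum Θ p.1 p.2) (ball 0 R) := by
  intro p hp
  apply DifferentiableAt.differentiableWithinAt
  obtain ⟨ρ, h1, h2⟩ := exists_between (mem_ball_zero_iff.1 hp)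
  have hρ0 : 0 ≤ ρ := (norm_nonneg _).trans h1.le
  have hR := h.1
  have hC := h.C_nonneg
  set δ := (R - ρ) / 2 with hδ
  have hδ0 : 0 < δ := by rw [hδ]; linarith
  have hq0 : 0 ≤ (ρ + δ) / R := by positivity
  have hq1 : (ρ + δ) / R < 1 := by rw [div_lt_one hR, hδ]; linarith
  have hd : ∀ β, DifferentiableOn ℂ
      (fun p : (Fin m → ℂ) × CS m => mpow p.1 β * Θ β p.2) (ball 0 R) := by
    intro β
    refine ((mpow_differentiable β).comp differentiable_fst).differentiableOn.mul ?_
    refine (h.2.1 β).comp differentiable_snd.differentiableOn ?_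
    intro q hq
    rw [mem_ball_zero_iff] at hq ⊢
    exact (norm_snd_le q).trans_lt hq
  have key := hasFDerivAt_tsum_of_isPreconnected (𝕜 := ℂ)
    (f := fun β (p : (Fin m → ℂ) × CS m) => mpow p.1 β * Θ β p.2)
    (f' := fun β p => fderiv ℂ (fun p : (Fin m → ℂ) × CS m => mpow p.1 β * Θ β p.2) p)
    (u := fun β => 2 * (C * ((ρ + δ) / R) ^ mdeg β) / δ) (s := ball 0 ρ) (x₀ := p) (x := p)
    (((summable_geom hq0 hq1).mul_left C).mul_left 2 |>.div_const δ)
    isOpen_ball (convex_ball _ _).isPreconnected ?_ ?_ (mem_ball_zero_iff.2 h1) (h.summable hp)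
    (mem_ball_zero_iff.2 h1)
  · exact key.differentiableAt
  · intro β y hy
    exact ((hd β).differentiableAt
      (isOpen_ball.mem_nhds (ball_subset_ball h2.le hy))).hasFDerivAt
  · intro β y hy
    have hs : ball y δ ⊆ ball 0 (ρ + δ) := by
      apply ball_subset_ball'
      rw [mem_ball] at hy
      linarith
    have hs' : ρ + δ ≤ R := by rw [hδ]; linarith
    exact norm_fderiv_le_cauchy hδ0 ((hd β).mono (hs.trans (ball_subset_ball hs')))
      fun z hz => h.term_le β hs' (hs hz)

/-- Power series expansion with holomorphic coefficients. -/
lemma exists_coeffs {T : Type} [NormedAddCommGroup T] [NormedSpace ℂ T] [FiniteDimensional ℂ T]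
    {B : Set T} (hB : IsOpen B) {R R' : ℝ} (hR' : 0 < R') (hRR : R' < R) :
    ∀ (m : ℕ) (f : (Fin m → ℂ) × T → ℂ) (C : ℝ), DifferentiableOn ℂ f (ball 0 R ×ˢ B) →
      (∀ p ∈ ball 0 R ×ˢ B, ‖f p‖ ≤ C) →
      ∃ c : (Fin m → ℕ) → T → ℂ, (∀ β, DifferentiableOn ℂ (c β) B) ∧
        (∀ β, ∀ t ∈ B, ‖c β t‖ ≤ C / R' ^ mdeg β) ∧
        ∀ ζ ∈ ball (0 : Fin m → ℂ) R', ∀ t ∈ B, HasSum (fun β => mpow ζ β * c β t) (f (ζ, t)) := by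
  have hR : 0 < R := hR'.trans hRR
  intro m
  induction m with
  | zero =>
    intro f C hf hC
    refine ⟨fun _ t => f (0, t), fun β => ?_, fun β t ht => ?_, fun ζ _ t _ => ?_⟩
    · refine hf.comp (by fun_prop) fun t ht => ⟨mem_ball_self hR, ht⟩
    · simpa [mdeg] using hC (0, t) ⟨mem_ball_self hR, ht⟩
    · have h := hasSum_unique (fun β : Fin 0 → ℕ => mpow ζ β * f (0, t))
      rw [show ζ = 0 from Subsingleton.elim _ _] at *
      simpa [mpow] using h
  | succ m ih =>
    intro f C hf hC
    set e : (Fin (m + 1) → ℂ) × T := (Pi.single 0 1, 0) with he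
    have hU : IsOpen (ball (0 : Fin (m + 1) → ℂ) R ×ˢ B) := isOpen_ball.prod hB
    have hcons : ∀ (a : ℂ) (w : Fin m → ℂ), ‖a‖ < R → w ∈ ball (0 : Fin m → ℂ) R →
        (Fin.cons a w : Fin (m + 1) → ℂ) ∈ ball (0 : Fin (m + 1) → ℂ) R := by
      intro a w ha hw
      rw [mem_ball_zero_iff, pi_norm_lt_iff hR] at hw ⊢
      intro i
      refine Fin.cases ?_ (fun i => ?_) i
      · simpa using ha
      · simpa using hw i
    have hline : ∀ (w : Fin m → ℂ) (t : T) (l : ℂ),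
        ((Fin.cons 0 w : Fin (m + 1) → ℂ), t) + l • e = (Fin.cons l w, t) := by
      intro w t l
      ext i
      · refine Fin.cases ?_ (fun i => ?_) i <;> simp [he]
      · simp [he]
    have hdl : ∀ (w : Fin m → ℂ) (t : T), w ∈ ball (0 : Fin m → ℂ) R → t ∈ B →
        DifferentiableOn ℂ (fun l : ℂ => f (((Fin.cons 0 w : Fin (m + 1) → ℂ), t) + l • e))
          (ball 0 R) := by
      intro w t hw ht
      refine hf.comp (by fun_prop) fun l hl => ?_
      simp only [hline]
      exact ⟨hcons l w (by simpa using hl) hw, ht⟩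
    have hit : ∀ (w : Fin m → ℂ) (t : T), w ∈ ball (0 : Fin m → ℂ) R → t ∈ B → ∀ j,
        iteratedDeriv j (fun l : ℂ => f (((Fin.cons 0 w : Fin (m + 1) → ℂ), t) + l • e)) 0
          = dl (List.replicate j e) f ((Fin.cons 0 w : Fin (m + 1) → ℂ), t) := by
      intro w t hw ht j
      rw [iteratedDeriv_line hU hf j 0 (by simpa using ⟨by simpa using hcons 0 w (by simpa using hR) hw, ht⟩)]
      simp
    set g : ℕ → (Fin m → ℂ) × T → ℂ := fun j p =>
      (j.factorial : ℂ)⁻¹ * dl (List.replicate j e) f ((Fin.cons 0 p.1 : Fin (m + 1) → ℂ), p.2) with hg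
    have hgd : ∀ j, DifferentiableOn ℂ (g j) (ball 0 R ×ˢ B) := by
      intro j
      refine DifferentiableOn.const_mul ?_ _
      refine (dl_diff hU hf _).comp (f := fun p : (Fin m → ℂ) × T =>
        ((Fin.cons 0 p.1 : Fin (m + 1) → ℂ), p.2)) ?_ ?_
      · apply Differentiable.differentiableOn
        refine Differentiable.prodMk ?_ differentiable_snd
        rw [differentiable_pi]
        intro i
        refine Fin.cases ?_ (fun i => ?_) i
        · simp
        · simp only [Fin.cons_succ]; fun_prop
      · intro p hp
        exact ⟨hcons 0 p.1 (by simpa using hR) hp.1, hp.2⟩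
    have hgb : ∀ j, ∀ p ∈ ball (0 : Fin m → ℂ) R ×ˢ B, ‖g j p‖ ≤ C / R' ^ j := by
      intro j p hp
      have h1 := Complex.norm_iteratedDeriv_le_of_forall_mem_sphere_norm_le (C := C) j hR'
        (DifferentiableOn.diffContOnCl ((hdl p.1 p.2 hp.1 hp.2).mono (by
          rw [closure_ball _ hR'.ne']; exact closedBall_subset_ball hRR))) (by
          intro z hz
          simp only [hline]
          refine hC _ ⟨hcons z p.1 ?_ hp.1, hp.2⟩
          rw [mem_sphere_zero_iff_norm] at hz
          linarith)
      rw [hit p.1 p.2 hp.1 hp.2] at h1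
      simp only [hg, norm_mul, norm_inv, Complex.norm_natCast]
      rw [inv_mul_le_iff₀ (by positivity)]
      refine h1.trans (le_of_eq ?_)
      ring
    choose c hcd hcb hcs using fun j => ih (g j) (C / R' ^ j) (hgd j) (hgb j)
    refine ⟨fun β => c (β 0) (Fin.tail β), fun β => hcd _ _, fun β t ht => ?_, fun ζ hζ t ht => ?_⟩
    · refine (hcb _ _ t ht).trans (le_of_eq ?_)
      conv_rhs => rw [← Fin.cons_self_tail β, mdeg_cons]
      rw [div_div, pow_add]
    · have hCn : 0 ≤ C := (norm_nonneg _).trans (hC (0, t) ⟨mem_ball_self hR, ht⟩)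
      obtain ⟨a, w, rfl⟩ : ∃ a w, ζ = (Fin.cons a w : Fin (m + 1) → ℂ) :=
        ⟨ζ 0, Fin.tail ζ, (Fin.cons_self_tail ζ).symm⟩
      have hζ' := hζ
      rw [mem_ball_zero_iff, pi_norm_lt_iff hR'] at hζ
      have ha : ‖a‖ < R' := by simpa using hζ 0
      have hw : w ∈ ball (0 : Fin m → ℂ) R' := by
        rw [mem_ball_zero_iff, pi_norm_lt_iff hR']
        intro i; simpa using hζ i.succ
      have hwR : w ∈ ball (0 : Fin m → ℂ) R := ball_subset_ball hRR.le hw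
      rw [← consSum_iff]
      simp only [mpow_cons, Fin.cons_zero, Fin.tail_cons]
      have hq0 : 0 ≤ ‖(Fin.cons a w : Fin (m + 1) → ℂ)‖ / R' := by positivity
      have hq1 : ‖(Fin.cons a w : Fin (m + 1) → ℂ)‖ / R' < 1 := by
        rw [div_lt_one hR']; simpa using hζ'
      have hsum : Summable fun p : ℕ × (Fin m → ℕ) => a ^ p.1 * mpow w p.2 * c p.1 p.2 t := by
        have h1 : Summable fun β : Fin (m + 1) → ℕ =>
            C * (‖(Fin.cons a w : Fin (m + 1) → ℂ)‖ / R') ^ mdeg β :=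
          (summable_geom hq0 hq1).mul_left C
        obtain ⟨s, hs⟩ := h1
        rw [← consSum_iff] at hs
        refine Summable.of_norm_bounded hs.summable fun p => ?_
        rw [← mpow_cons, norm_mul]
        have h2 := hcb p.1 p.2 t ht
        calc _ ≤ ‖(Fin.cons a w : Fin (m + 1) → ℂ)‖ ^ mdeg (Fin.cons p.1 p.2 : Fin (m + 1) → ℕ) *
              (C / R' ^ p.1 / R' ^ mdeg p.2) := by
              gcongr
              exact norm_mpow_le _ _
          _ = _ := by rw [mdeg_cons, div_pow, pow_add, pow_add]; field_simp
      have hin : ∀ j, HasSum (fun β => a ^ j * mpow w β * c j β t) (a ^ j * g j (w, t)) := by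
        intro j
        simpa [mul_assoc] using (hcs j w hw t ht).mul_left (a ^ j)
      have hout := hsum.hasSum.prod_fiberwise hin
      have ht2 := Complex.hasSum_taylorSeries_on_ball (hdl w t hwR ht) (z := a)
        (by rw [mem_ball_zero_iff]; linarith)
      simp only [hit w t hwR ht] at ht2
      simp only [hline, sub_zero, smul_eq_mul] at ht2
      have : (fun j => a ^ j * g j (w, t)) = fun n => ((n.factorial : ℂ))⁻¹ *
          (a ^ n * dl (List.replicate n e) f (Fin.cons 0 w, t)) := by
        funext j; simp only [hg]; ring
      rw [this] at hout
      rw [← hout.unique ht2]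
      exact hsum.hasSum

end SeriesTools

section JetTools
variable {m : ℕ}

lemma conjW_eq_star (w : Fin m → ℂ) : conjW w = star w := rfl
lemma conjCS_eq_star (t : CS m) : conjCS t = star t := rfl

@[simp] lemma conjCS_conjCS (t : CS m) : conjCS (conjCS t) = t := by
  rw [conjCS_eq_star, conjCS_eq_star, star_star]
@[simp] lemma conjW_conjW (t : Fin m → ℂ) : conjW (conjW t) = t := by
  rw [conjW_eq_star, conjW_eq_star, star_star]

lemma norm_conjCS (t : CS m) : ‖conjCS t‖ = ‖t‖ := by rw [conjCS_eq_star, norm_star]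
lemma norm_conjW (t : Fin m → ℂ) : ‖conjW t‖ = ‖t‖ := by rw [conjW_eq_star, norm_star]

lemma continuous_conjCS : Continuous (conjCS : CS m → CS m) := continuous_star
lemma continuous_conjW : Continuous (conjW : (Fin m → ℂ) → _) := continuous_star

/-- uncurried series -/
def thS (Θ : (Fin m → ℕ) → CS m → ℂ) : (Fin m → ℂ) × CS m → ℂ := fun p => ThetaSum Θ p.1 p.2
/-- uncurried conjugate series -/
def thB (Θ : (Fin m → ℕ) → CS m → ℂ) : (Fin m → ℂ) × CS m → ℂ := fun p => ThetaBar Θ p.1 p.2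

lemma conj_mpow (w : Fin m → ℂ) (β : Fin m → ℕ) :
    starRingEnd ℂ (mpow w β) = mpow (conjW w) β := by
  simp [mpow, conjW]

lemma thetaBar_eq (Θ : (Fin m → ℕ) → CS m → ℂ) (w : Fin m → ℂ) (τ : CS m) :
    ThetaBar Θ w τ = starRingEnd ℂ (ThetaSum Θ (conjW w) (conjCS τ)) := by
  unfold ThetaBar ThetaSum
  rw [starRingEnd_apply, tsum_star]
  congr 1; funext β
  rw [← starRingEnd_apply, map_mul, conj_mpow, conjW_conjW]

lemma thB_eq (Θ : (Fin m → ℕ) → CS m → ℂ) : thB Θ = star ∘ thS Θ ∘ star := by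
  funext p; exact thetaBar_eq Θ p.1 p.2

lemma diffAt_star_star {E F : Type} [NormedAddCommGroup E] [NormedSpace ℂ E] [StarAddMonoid E]
    [StarModule ℂ E] [ContinuousStar E] [NormedAddCommGroup F] [NormedSpace ℂ F] [StarAddMonoid F]
    [StarModule ℂ F] [ContinuousStar F] {f : E → F} {x : E} (hf : DifferentiableAt ℂ f (star x)) :
    DifferentiableAt ℂ (star ∘ f ∘ star) x := by
  have := DifferentiableAt.star_star hf
  rwa [star_star] at this

lemma Good.diffS {Θ : (Fin m → ℕ) → CS m → ℂ} {R C : ℝ} (h : Good Θ R C) :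
    DifferentiableOn ℂ (thS Θ) (ball 0 R) := h.diff

lemma Good.diffB {Θ : (Fin m → ℕ) → CS m → ℂ} {R C : ℝ} (h : Good Θ R C) :
    DifferentiableOn ℂ (thB Θ) (ball 0 R) := by
  intro p hp
  rw [thB_eq]
  refine (diffAt_star_star (h.diffS.differentiableAt (isOpen_ball.mem_nhds ?_))).differentiableWithinAt
  rw [mem_ball_zero_iff] at *
  rwa [norm_star]

/-- coordinate directions -/
def ep (i : Fin m) : (Fin m → ℂ) × CS m := (Pi.single i 1, 0)

lemma pderivList_eq {f : (Fin m → ℂ) × CS m → ℂ} {U : Set ((Fin m → ℂ) × CS m)} (hU : IsOpen U)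
    (hf : DifferentiableOn ℂ f U) (τ : CS m) (L : List (Fin m)) :
    ∀ s : CS m, (s.1, τ) ∈ U → pderivList L (fun s => s.2 - f (s.1, τ)) s =
      (if L = [] then s.2 else 0) - dl (L.map ep) f (s.1, τ) := by
  induction L with
  | nil => intro s _; simp [pderivList]
  | cons i L ih =>
    intro s hs
    have hV : {s : CS m | (s.1, τ) ∈ U} ∈ 𝓝 s :=
      (by fun_prop : Continuous fun s : CS m => (s.1, τ)).continuousAt.preimage_mem_nhds
        (hU.mem_nhds hs)
    have he : pderivList L (fun s => s.2 - f (s.1, τ)) =ᶠ[𝓝 s]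
        fun s => (if L = [] then s.2 else 0) - dl (L.map ep) f (s.1, τ) := by
      filter_upwards [hV] with y hy using ih y hy
    simp only [pderivList, pderivW, List.map_cons, dl_cons, reduceCtorEq, if_false, zero_sub]
    rw [he.fderiv_eq]
    have h1 : HasFDerivAt (fun s : CS m => if L = [] then s.2 else 0)
        (if L = [] then ContinuousLinearMap.snd ℂ (Fin m → ℂ) ℂ else 0) s := by
      split_ifs
      · exact hasFDerivAt_snd
      · exact hasFDerivAt_const _ _
    have h2 : HasFDerivAt (fun s : CS m => (s.1, τ))
        ((ContinuousLinearMap.fst ℂ (Fin m → ℂ) ℂ).prod 0) s :=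
      hasFDerivAt_fst.prodMk (hasFDerivAt_const _ _)
    have h3 := (((dl_diff hU hf (L.map ep)).differentiableAt (hU.mem_nhds hs)).hasFDerivAt).comp s h2
    rw [show (fun s : CS m => (if L = [] then s.2 else 0) - dl (L.map ep) f (s.1, τ)) =
      (fun s : CS m => if L = [] then s.2 else 0) - dl (L.map ep) f ∘ (fun s : CS m => (s.1, τ)) from rfl]
    rw [(h1.sub h3).fderiv]
    have : (if L = [] then ContinuousLinearMap.snd ℂ (Fin m → ℂ) ℂ else 0) (Pi.single i 1, 0) = 0 := by
      split_ifs <;> rfl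
    simp only [_root_.sub_apply, this, zero_sub]
    rfl

lemma mem_indexList_count (L : List (Fin m)) : L.Perm (indexList fun i => L.count i) := by
  rw [List.perm_iff_count]
  intro a
  simp only [indexList, List.count_flatMap, Function.comp_def, List.count_replicate]
  simp [← List.ofFn_eq_map, List.sum_ofFn]

lemma length_indexList (β : Fin m → ℕ) : (indexList β).length = mdeg β := by
  simp [indexList, mdeg, List.length_flatMap, ← List.ofFn_eq_map, List.sum_ofFn]

lemma mdeg_count (L : List (Fin m)) : mdeg (fun i => L.count i) = L.length := by
  rw [← length_indexList, ← (mem_indexList_count L).length_eq]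

lemma jet_ker {Θ : (Fin m → ℕ) → CS m → ℂ} {R C : ℝ} (h : Good Θ R C) (k : ℕ)
    (p : CS m × (Fin m → ℂ)) (hp1 : ‖p.1‖ < R) (hp2 : ‖p.2‖ < R) (hp3 : ‖ThetaSum Θ p.2 p.1‖ < R)
    (v : CS m × (Fin m → ℂ)) :
    fderiv ℂ (segreJetMap Θ k) p v = 0 ↔ v.1 = 0 ∧ ∀ L : List (Fin m), L.length ≤ k →
      fderiv ℂ (dl (L.map ep) (thB Θ)) (p.1.1, (p.2, ThetaSum Θ p.2 p.1))
        (0, (v.2, fderiv ℂ (thS Θ) (p.2, p.1) (v.2, 0))) = 0 := by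
  have hS : DifferentiableAt ℂ (thS Θ) (p.2, p.1) :=
    h.diffS.differentiableAt (isOpen_ball.mem_nhds (by
      rw [mem_ball_zero_iff, Prod.norm_mk]; exact max_lt hp2 hp1))
  have hw : ‖p.1.1‖ < R := (norm_fst_le p.1).trans_lt hp1
  have hmem : (p.1.1, (p.2, ThetaSum Θ p.2 p.1)) ∈ ball (0 : (Fin m → ℂ) × CS m) R := by
    rw [mem_ball_zero_iff, Prod.norm_mk, Prod.norm_mk]
    exact max_lt hw (max_lt hp2 hp3)
  -- the inner map
  set j : CS m × (Fin m → ℂ) → (Fin m → ℂ) × CS m := fun p => (p.1.1, (p.2, thS Θ (p.2, p.1)))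
    with hj
  have hjd : HasFDerivAt j (((ContinuousLinearMap.fst ℂ _ _).comp (ContinuousLinearMap.fst ℂ _ _)).prod
      ((ContinuousLinearMap.snd ℂ _ _).prod ((fderiv ℂ (thS Θ) (p.2, p.1)).comp
        ((ContinuousLinearMap.snd ℂ (CS m) (Fin m → ℂ)).prod (ContinuousLinearMap.fst ℂ _ _))))) p := by
    refine HasFDerivAt.prodMk ?_ (HasFDerivAt.prodMk hasFDerivAt_snd ?_)
    · exact (hasFDerivAt_fst (𝕜 := ℂ)).comp p hasFDerivAt_fst
    · exact HasFDerivAt.comp p (g := thS Θ) (f := fun p : CS m × (Fin m → ℂ) => (p.2, p.1))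
        hS.hasFDerivAt (hasFDerivAt_snd.prodMk hasFDerivAt_fst)
  have hjp : j p = (p.1.1, (p.2, ThetaSum Θ p.2 p.1)) := rfl
  have hev : ∀ᶠ y in 𝓝 p, j y ∈ ball (0 : (Fin m → ℂ) × CS m) R :=
    hjd.continuousAt.eventually_mem (isOpen_ball.mem_nhds hmem)
  let g : List (Fin m) → CS m × (Fin m → ℂ) → ℂ := fun L y =>
    (if L = [] then y.1.2 else 0) - dl (L.map ep) (thB Θ) (j y)
  have hg : ∀ L, ∃ g' : CS m × (Fin m → ℂ) →L[ℂ] ℂ, HasFDerivAt (g L) g' p ∧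
      (∀ v, v.1 = 0 → g' v = - fderiv ℂ (dl (L.map ep) (thB Θ)) (p.1.1, (p.2, ThetaSum Θ p.2 p.1))
        (0, (v.2, fderiv ℂ (thS Θ) (p.2, p.1) (v.2, 0)))) := by
    intro L
    have h1 : HasFDerivAt (fun s : CS m × (Fin m → ℂ) => if L = [] then s.1.2 else 0)
        (if L = [] then (ContinuousLinearMap.snd ℂ (Fin m → ℂ) ℂ).comp
          (ContinuousLinearMap.fst ℂ _ _) else 0) p := by
      split_ifs
      · exact (hasFDerivAt_snd (𝕜 := ℂ)).comp p hasFDerivAt_fst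
      · exact hasFDerivAt_const _ _
    have h3 := (((dl_diff isOpen_ball h.diffB (L.map ep)).differentiableAt
      (isOpen_ball.mem_nhds hmem)).hasFDerivAt).comp p hjd
    refine ⟨_, h1.sub h3, fun v hv => ?_⟩
    have h0 : (if L = [] then (ContinuousLinearMap.snd ℂ (Fin m → ℂ) ℂ).comp
          (ContinuousLinearMap.fst ℂ (CS m) (Fin m → ℂ)) else 0) v = 0 := by
      split_ifs
      · simp [hv]
      · rfl
    rw [_root_.sub_apply, h0, zero_sub]
    simp [hv]
  choose g' hg' hg'v using hg
  let G' : (Fin m → Fin (k + 1)) → (CS m × (Fin m → ℂ) →L[ℂ] ℂ) := fun β =>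
    if mdeg (fun i => (β i : ℕ)) ≤ k then g' (indexList fun i => (β i : ℕ)) else 0
  have hfd : HasFDerivAt (segreJetMap Θ k)
      ((ContinuousLinearMap.fst ℂ _ _).prod (ContinuousLinearMap.pi G')) p := by
    have : segreJetMap Θ k =ᶠ[𝓝 p] fun y => (y.1, fun β : Fin m → Fin (k + 1) =>
        if mdeg (fun i => (β i : ℕ)) ≤ k then g (indexList fun i => (β i : ℕ)) y else 0) := by
      filter_upwards [hev] with y hy
      simp only [segreJetMap]
      congr 1; funext β
      split_ifs with hβ
      · exact pderivList_eq isOpen_ball h.diffB (y.2, ThetaSum Θ y.2 y.1) _ y.1 hy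
      · rfl
    refine HasFDerivAt.congr_of_eventuallyEq ?_ this
    refine hasFDerivAt_fst.prodMk (hasFDerivAt_pi.2 fun β => ?_)
    simp only [G']
    split_ifs
    · exact hg' _
    · exact hasFDerivAt_const _ _
  rw [hfd.fderiv]
  constructor
  · intro hv
    have hv1 : v.1 = 0 := congrArg Prod.fst hv
    refine ⟨hv1, fun L hL => ?_⟩
    have hc : ∀ i, L.count i < k + 1 := fun i => Nat.lt_succ_of_le (L.count_le_length.trans hL)
    have h2 : G' (fun i => ⟨L.count i, hc i⟩) v = 0 := congrFun (congrArg Prod.snd hv) _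
    simp only [G', mdeg_count, hL, if_true] at h2
    rw [hg'v _ _ hv1, neg_eq_zero] at h2
    rw [← h2]
    have := (dl_perm isOpen_ball h.diffB ((mem_indexList_count L).map ep)).eventuallyEq_of_mem
      (isOpen_ball.mem_nhds hmem)
    rw [this.fderiv_eq]
  · rintro ⟨hv1, h2⟩
    refine Prod.ext hv1 (funext fun β => ?_)
    change G' β v = 0
    simp only [G']
    split_ifs with hβ
    · rw [hg'v _ _ hv1, h2 _ (by rwa [length_indexList]), neg_zero]
    · rfl

end JetTools

section Reality
variable {m : ℕ}

lemma real_kill {E : Type} [NormedAddCommGroup E] [NormedSpace ℝ E] [CompleteSpace E]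
    {ρ : E → ℝ} {ρ' : E →L[ℝ] ℝ} {g : E → ℂ} {g' : E →L[ℝ] ℂ} {p : E}
    (hρ : HasStrictFDerivAt ρ ρ' p) (hρ' : ρ' ≠ 0) (hg : HasStrictFDerivAt g g' p)
    (hev : ∀ᶠ t in 𝓝 p, ρ t = ρ p → g t = g p) (v : E) (hv : ρ' v = 0) : g' v = 0 := by
  have key : ∀ (l : ℂ →L[ℝ] ℝ), l (g' v) = 0 := by
    intro l
    have h1 : IsLocalExtrOn (fun t => l (g t)) {t | ρ t = ρ p} p := by
      left
      have : ∀ᶠ t in 𝓝[{t | ρ t = ρ p}] p, g t = g p := by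
        rw [eventually_nhdsWithin_iff]; exact hev
      exact this.mono fun t ht => by simp [ht]
    obtain ⟨a, b, hab, h0⟩ := h1.exists_multipliers_of_hasStrictFDerivAt_1d hρ
      (l.hasStrictFDerivAt.comp p hg)
    have hb : b ≠ 0 := by
      rintro rfl
      simp only [zero_smul, add_zero, smul_eq_zero, hρ', or_false] at h0
      exact hab (by rw [h0]; rfl)
    have := DFunLike.congr_fun h0 v
    simp [hv, hb] at this
    exact this
  apply Complex.ext
  · exact key Complex.reCLM
  · exact key Complex.imCLM

lemma real_analytic_data {M : Set (CS m)} (hM : IsRealAnalyticHypersurface M) {p : CS m}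
    (hp : p ∈ M) : ∃ (ρ : CS m → ℝ) (ρ' : CS m →L[ℝ] ℝ), ρ' ≠ 0 ∧ HasStrictFDerivAt ρ ρ' p ∧
      ∀ᶠ t in 𝓝 p, ρ t = ρ p → t ∈ M := by
  obtain ⟨U, ρ, hU, hpU, han, hne, hMU⟩ := hM.2 p hp
  refine ⟨ρ, _, hne, (han p hpU).hasStrictFDerivAt, ?_⟩
  have h0 : ρ p = 0 := by
    have : p ∈ M ∩ U := ⟨hp, hpU⟩
    rw [hMU] at this; exact this.2
  filter_upwards [hU.mem_nhds hpU] with t ht h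
  have : t ∈ {z ∈ U | ρ z = 0} := ⟨ht, h.trans h0⟩
  rw [← hMU] at this
  exact this.1

/-- real linear conjugation -/
def conjWL : (Fin m → ℂ) →L[ℝ] (Fin m → ℂ) :=
  ContinuousLinearMap.pi fun i => (Complex.conjCLE : ℂ →L[ℝ] ℂ).comp (ContinuousLinearMap.proj i)

lemma conjWL_apply (w : Fin m → ℂ) : conjWL w = conjW w := rfl

lemma hol_kill {M : Set (CS m)} (hM : IsRealAnalyticHypersurface M) {d : DefData m}
    (hd : d.IsDefiningSeriesOf M) {p : CS m} (hp : p ∈ M) (hpb : p ∈ ball (0 : CS m) d.r)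
    {f : CS m × (Fin m → ℂ) → ℂ} {U : Set (CS m × (Fin m → ℂ))} (hU : IsOpen U)
    (hpU : (p, conjW p.1) ∈ U) (hf : DifferentiableOn ℂ f U)
    (h0 : ∀ᶠ t in 𝓝 p, t ∈ M → f (t, conjW t.1) = 0) :
    fderiv ℂ f (p, conjW p.1) = 0 := by
  obtain ⟨ρ, ρ', hne, hρ, hρM⟩ := real_analytic_data hM hp
  have hgood : Good d.Θ (2 * d.r) d.C := ⟨by linarith [hd.1], hd.2.2.1, hd.2.2.2.1⟩
  have hrpos := hd.1
  -- derivative of t ↦ conj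
  have hcj : HasStrictFDerivAt (fun t : CS m => conjW t.1)
      (conjWL.comp (ContinuousLinearMap.fst ℝ (Fin m → ℂ) ℂ)) p :=
    (conjWL.comp (ContinuousLinearMap.fst ℝ (Fin m → ℂ) ℂ)).hasStrictFDerivAt
  have hstrict : ∀ {E F : Type} [NormedAddCommGroup E] [NormedSpace ℂ E] [FiniteDimensional ℂ E]
      [NormedAddCommGroup F] [NormedSpace ℂ F] [FiniteDimensional ℂ F] (f : E → F) (U : Set E) (x : E),
      IsOpen U → x ∈ U → DifferentiableOn ℂ f U →
      HasStrictFDerivAt f ((fderiv ℂ f x).restrictScalars ℝ) x := by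
    intro E F _ _ _ _ _ _ f U x hU hx hf
    exact ((contDiffAt_of_diff hU hf 1 hx).hasStrictFDerivAt (by simp)).restrictScalars ℝ
  set L := fderiv ℂ f (p, conjW p.1) with hL
  have hkill1 : ∀ v, ρ' v = 0 → L (v, conjW v.1) = 0 := by
    intro v hv
    have hg := (hstrict f U _ hU hpU hf).comp p ((hasStrictFDerivAt_id p).prodMk hcj)
    have := real_kill hρ hne hg (by
      have hfp : f (p, conjW p.1) = 0 := h0.self_of_nhds hp
      filter_upwards [h0, hρM] with t h1 h2 h3
      simp only [id]
      rw [h1 (h2 h3), hfp]) v hv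
    exact this
  have hR : ‖p‖ < 2 * d.r := by
    rw [mem_ball_zero_iff] at hpb; linarith
  have hmem : (conjW p.1, p) ∈ ball (0 : (Fin m → ℂ) × CS m) (2 * d.r) := by
    rw [mem_ball_zero_iff, Prod.norm_mk, norm_conjW]
    exact max_lt ((norm_fst_le p).trans_lt hR) hR
  have hnv : ∃ c : ℂ, ρ' (0, c) ≠ 0 := by
    by_contra! hall
    have hg := (Complex.conjCLE : ℂ →L[ℝ] ℂ).hasStrictFDerivAt.comp p (hasStrictFDerivAt_snd (𝕜 := ℝ) (p := p))
    have hg2 := hg.sub (HasStrictFDerivAt.comp p (f := fun t : CS m => (conjW t.1, id t))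
      (hstrict _ _ _ isOpen_ball hmem hgood.diffS) (hcj.prodMk (hasStrictFDerivAt_id p)))
    have hz : ∀ c : ℂ, starRingEnd ℂ c - fderiv ℂ (thS d.Θ) (conjW p.1, p) (0, (0, c)) = 0 := by
      intro c
      have := real_kill hρ hne hg2 (by
        filter_upwards [hρM, isOpen_ball.mem_nhds hpb] with t h2 h3 h4
        have e1 := (hd.2.2.2.2.2 t h3).1 (h2 h4)
        have e2 := (hd.2.2.2.2.2 p hpb).1 hp
        simp only [Pi.sub_apply, id, thS]
        simp [e1, e2]) (0, c) (hall c)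
      simpa using this
    have e1 := hz 1
    have e2 := hz I
    have : ((0 : Fin m → ℂ), ((0 : Fin m → ℂ), I)) = I • ((0 : Fin m → ℂ), ((0 : Fin m → ℂ), (1:ℂ))) := by
      simp
    rw [this, map_smul] at e2
    rw [map_one] at e1
    rw [← sub_eq_zero.1 e1] at e2
    simp at e2
    have := congrArg Complex.im e2
    simp at this
    norm_num at this
  obtain ⟨c₁, hc₁⟩ := hnv
  -- a nonzero vertical vector in the kernel
  obtain ⟨c₀, hc₀, hc₀'⟩ : ∃ c : ℂ, c ≠ 0 ∧ ρ' (0, c) = 0 := by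
    have e1 : ∀ a b : ℝ, ρ' (0, (a : ℂ) + b * I) = a * ρ' (0, 1) + b * ρ' (0, I) := by
      intro a b
      have : ((0 : Fin m → ℂ), (a : ℂ) + b * I) = a • ((0 : Fin m → ℂ), (1 : ℂ)) + b • ((0 : Fin m → ℂ), I) := by
        simp
      rw [this, map_add, map_smul, map_smul]; rfl
    by_cases h : ρ' (0, 1) = 0
    · exact ⟨1, one_ne_zero, h⟩
    · refine ⟨((-ρ' (0, I) : ℝ) : ℂ) + ((ρ' (0, 1) : ℝ) : ℂ) * I, ?_, ?_⟩
      · intro h0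
        have := congrArg Complex.im h0
        simp at this
        exact h this
      · rw [e1]; ring
  have hv1 : L ((0, 1), 0) = 0 := by
    have := hkill1 (0, c₀) hc₀'
    have e : (((0 : Fin m → ℂ), c₀), conjW (0 : Fin m → ℂ)) = c₀ • (((0 : Fin m → ℂ), (1:ℂ)), (0 : Fin m → ℂ)) := by
      have : conjW (0 : Fin m → ℂ) = 0 := by funext i; simp [conjW]
      simp [this]
    rw [e, map_smul] at this
    simpa [hc₀] using this
  have hvz : ∀ c, L ((0, c), 0) = 0 := by
    intro c
    have e : (((0 : Fin m → ℂ), c), (0 : Fin m → ℂ)) = c • (((0 : Fin m → ℂ), (1:ℂ)), (0 : Fin m → ℂ)) := by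
      simp
    rw [e, map_smul, hv1, smul_zero]
  have hw : ∀ w : Fin m → ℂ, L ((w, 0), conjW w) = 0 := by
    intro w
    set a : ℝ := - ρ' (w, 0) / ρ' (0, c₁)
    have e0 : ρ' (w, a • c₁) = 0 := by
      have : (w, a • c₁) = (w, (0:ℂ)) + a • ((0 : Fin m → ℂ), c₁) := by simp
      rw [this, map_add, map_smul, smul_eq_mul]
      simp only [a]; field_simp; ring
    have e1 := hkill1 _ e0
    have e2 : ((w, a • c₁), conjW w) = ((w, (0:ℂ)), conjW w) + (((0 : Fin m → ℂ), a • c₁), (0 : Fin m → ℂ)) := by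
      simp
    simp only at e1
    rw [e2, map_add, hvz, add_zero] at e1
    exact e1
  have hw2 : ∀ w : Fin m → ℂ, L ((w, 0), 0) = 0 ∧ L (0, conjW w) = 0 := by
    intro w
    have e1 := hw w
    have e2 := hw (I • w)
    have c1 : ((w, (0:ℂ)), conjW w) = ((w, (0:ℂ)), (0 : Fin m → ℂ)) + ((0 : CS m), conjW w) := by simp
    have c2 : ((I • w, (0:ℂ)), conjW (I • w)) =
        I • ((w, (0:ℂ)), (0 : Fin m → ℂ)) - I • ((0 : CS m), conjW w) := by
      ext <;> simp [conjW]
    rw [c1, map_add] at e1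
    rw [c2, map_sub, map_smul, map_smul, ← smul_sub] at e2
    have e3 := (smul_eq_zero.1 e2).resolve_left I_ne_zero
    have e4 : L ((w, 0), 0) = 0 := by linear_combination (e1 + e3) / 2
    exact ⟨e4, by linear_combination e1 - e4⟩
  refine ContinuousLinearMap.ext fun v => ?_
  obtain ⟨⟨w, z⟩, u⟩ := v
  have : ((w, z), u) = ((w, (0:ℂ)), (0 : Fin m → ℂ)) + (((0 : Fin m → ℂ), z), (0 : Fin m → ℂ)) +
      ((0 : CS m), conjW (conjW u)) := by simp
  rw [this, map_add, map_add, (hw2 w).1, hvz, (hw2 (conjW u)).2]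
  simp

lemma vanish_near {M : Set (CS m)} (hM : IsRealAnalyticHypersurface M) {d : DefData m}
    (hd : d.IsDefiningSeriesOf M) {q : CS m} (hq : q ∈ M) (hqb : q ∈ ball (0 : CS m) d.r)
    {f : CS m × (Fin m → ℂ) → ℂ} {U : Set (CS m × (Fin m → ℂ))} (hU : IsOpen U)
    (hqU : (q, conjW q.1) ∈ U) (hf : DifferentiableOn ℂ f U)
    (h0 : ∀ t ∈ M, t ∈ ball (0 : CS m) d.r → (t, conjW t.1) ∈ U → f (t, conjW t.1) = 0) :
    ∀ᶠ y in 𝓝 (q, conjW q.1), f y = 0 := by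
  have hcont : Continuous fun t : CS m => (t, conjW t.1) :=
    continuous_id.prodMk (continuous_conjW.comp continuous_fst)
  have key : ∀ Ls : List (CS m × (Fin m → ℂ)), ∀ t ∈ M, t ∈ ball (0 : CS m) d.r →
      (t, conjW t.1) ∈ U → dl Ls f (t, conjW t.1) = 0 := by
    intro Ls
    induction Ls with
    | nil => exact h0
    | cons v Ls ih =>
      intro t ht htb htU
      have := hol_kill hM hd ht htb hU htU (dl_diff hU hf Ls) (by
        filter_upwards [isOpen_ball.mem_nhds htb, hcont.continuousAt.preimage_mem_nhds (hU.mem_nhds htU)]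
          with y h1 h2 h3 using ih y h3 h1 h2)
      change fderiv ℂ (dl Ls f) (t, conjW t.1) v = 0
      rw [this]; rfl
  obtain ⟨ε, hε, hb⟩ := Metric.isOpen_iff.1 hU _ hqU
  filter_upwards [ball_mem_nhds _ hε] with y hy
  exact eq_zero_of_dl (hf.mono hb) (fun v n => key _ q hq hqb hqU) y hy

lemma reality {M : Set (CS m)} (hM : IsRealAnalyticHypersurface M) {d : DefData m}
    (hd : d.IsDefiningSeriesOf M) {q : CS m} (hq : q ∈ M) (hqb : q ∈ ball (0 : CS m) d.r) :
    ∀ᶠ p : CS m × CS m in 𝓝 (q, conjCS q),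
      (p.2.2 = thS d.Θ (p.2.1, p.1) ↔ p.1.2 = thB d.Θ (p.1.1, p.2)) := by
  have hgood : Good d.Θ (2 * d.r) d.C := ⟨by linarith [hd.1], hd.2.2.1, hd.2.2.2.1⟩
  have hrpos := hd.1
  let U0 : Set (CS m × (Fin m → ℂ)) := {p | (p.2, p.1) ∈ ball (0 : (Fin m → ℂ) × CS m) (2 * d.r)}
  have hU0 : IsOpen U0 := isOpen_ball.preimage (by fun_prop)
  have hSd : DifferentiableOn ℂ (fun p : CS m × (Fin m → ℂ) => thS d.Θ (p.2, p.1)) U0 :=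
    hgood.diffS.comp (by fun_prop) fun p hp => hp
  let U : Set (CS m × (Fin m → ℂ)) := U0 ∩ (fun p => thS d.Θ (p.2, p.1)) ⁻¹' (ball 0 (2 * d.r))
  have hU : IsOpen U := hSd.continuousOn.isOpen_inter_preimage hU0 isOpen_ball
  let F : CS m × (Fin m → ℂ) → ℂ := fun p => p.1.2 - thB d.Θ (p.1.1, (p.2, thS d.Θ (p.2, p.1)))
  have hF : DifferentiableOn ℂ F U := by
    refine DifferentiableOn.sub (by fun_prop) (hgood.diffB.comp ?_ ?_)
    · exact DifferentiableOn.prodMk (by fun_prop) (DifferentiableOn.prodMk (by fun_prop)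
        (hSd.mono inter_subset_left))
    · intro p hp
      have h1 := hp.1
      have h2 := hp.2
      simp only [U0, Set.mem_ofPred_eq, mem_ball_zero_iff, Prod.norm_mk, mem_preimage, max_lt_iff] at h1 h2 ⊢
      exact ⟨(norm_fst_le p.1).trans_lt h1.2, h1.1, h2⟩
  have hMU : ∀ t ∈ M, t ∈ ball (0 : CS m) d.r → (t, conjW t.1) ∈ U := by
    intro t ht htb
    have e := (hd.2.2.2.2.2 t htb).1 ht
    have hR : ‖t‖ < 2 * d.r := by rw [mem_ball_zero_iff] at htb; linarith
    refine ⟨?_, ?_⟩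
    · simp only [U0, Set.mem_ofPred_eq, mem_ball_zero_iff, Prod.norm_mk, norm_conjW]
      exact max_lt ((norm_fst_le t).trans_lt hR) hR
    · simp only [mem_preimage, thS, ← e, mem_ball_zero_iff]
      rw [RCLike.norm_conj]
      exact (norm_snd_le t).trans_lt hR
  have hv := vanish_near hM hd hq hqb hU (hMU q hq hqb) hF (by
    intro t ht htb _
    have e := (hd.2.2.2.2.2 t htb).1 ht
    have e2 : thB d.Θ (t.1, (conjW t.1, thS d.Θ (conjW t.1, t))) = t.2 := by
      simp only [thS, ← e, thB]
      change ThetaBar d.Θ t.1 (conjCS t) = t.2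
      rw [thetaBar_eq, conjCS_conjCS, ← e, Complex.conj_conj]
    simp only [F]
    rw [e2, sub_self])
  have hone : ∀ᶠ p : CS m × CS m in 𝓝 (q, conjCS q),
      p.2.2 = thS d.Θ (p.2.1, p.1) → p.1.2 = thB d.Θ (p.1.1, p.2) := by
    have hc : ContinuousAt (fun p : CS m × CS m => (p.1, p.2.1)) (q, conjCS q) := by fun_prop
    filter_upwards [hc.eventually hv] with p hp h
    simp only [F] at hp
    rw [← h] at hp
    exact sub_eq_zero.1 hp
  have htwo : ∀ᶠ p : CS m × CS m in 𝓝 (q, conjCS q),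
      (conjCS p.1).2 = thS d.Θ ((conjCS p.1).1, conjCS p.2) →
        (conjCS p.2).2 = thB d.Θ ((conjCS p.2).1, conjCS p.1) := by
    have hc : Tendsto (fun p : CS m × CS m => (conjCS p.2, conjCS p.1)) (𝓝 (q, conjCS q))
        (𝓝 (q, conjCS q)) := by
      have : Continuous (fun p : CS m × CS m => (conjCS p.2, conjCS p.1)) :=
        (continuous_conjCS.comp continuous_snd).prodMk (continuous_conjCS.comp continuous_fst)
      have := this.tendsto (q, conjCS q)
      simpa using this
    exact hc.eventually hone
  filter_upwards [hone, htwo] with p h1 h2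
  refine ⟨h1, fun h => ?_⟩
  have h3 := h2 (by
    change starRingEnd ℂ p.1.2 = ThetaSum d.Θ (conjW p.1.1) (conjCS p.2)
    rw [h]
    change starRingEnd ℂ (ThetaBar d.Θ _ _) = _
    rw [thetaBar_eq, Complex.conj_conj])
  change starRingEnd ℂ p.2.2 = ThetaBar d.Θ (conjW p.2.1) (conjCS p.1) at h3
  rw [thetaBar_eq, conjW_conjW, conjCS_conjCS] at h3
  exact (starRingEnd ℂ).injective h3

end Reality

section RankStep
variable {m : ℕ}

/-- jets of the conjugate series at the base point -/
def cL (Θ : (Fin m → ℕ) → CS m → ℂ) (w : Fin m → ℂ) (L : List (Fin m)) : CS m → ℂ :=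
  fun τ => dl (L.map ep) (thB Θ) (w, τ)

lemma cL_hasFDerivAt {Θ : (Fin m → ℕ) → CS m → ℂ} {R C : ℝ} (h : Good Θ R C) {w : Fin m → ℂ}
    {τ : CS m} (hw : ‖w‖ < R) (hτ : ‖τ‖ < R) (L : List (Fin m)) :
    HasFDerivAt (cL Θ w L) ((fderiv ℂ (dl (L.map ep) (thB Θ)) (w, τ)).comp
      (ContinuousLinearMap.inr ℂ (Fin m → ℂ) (CS m))) τ := by
  have hmem : (w, τ) ∈ ball (0 : (Fin m → ℂ) × CS m) R := by
    rw [mem_ball_zero_iff, Prod.norm_mk]; exact max_lt hw hτ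
  have h1 := ((dl_diff isOpen_ball h.diffB (L.map ep)).differentiableAt
    (isOpen_ball.mem_nhds hmem)).hasFDerivAt
  exact HasFDerivAt.comp τ (f := fun τ : CS m => (w, τ)) h1 (hasFDerivAt_prodMk_right w τ)

lemma cL_diff {Θ : (Fin m → ℕ) → CS m → ℂ} {R C : ℝ} (h : Good Θ R C) {w : Fin m → ℂ}
    (hw : ‖w‖ < R) (L : List (Fin m)) :
    DifferentiableOn ℂ (cL Θ w L) (ball 0 R) := fun τ hτ =>
  (cL_hasFDerivAt h hw (mem_ball_zero_iff.1 hτ) L).differentiableAt.differentiableWithinAt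

/-- common kernel -/
def KK (Θ : (Fin m → ℕ) → CS m → ℂ) (w : Fin m → ℂ) (k : ℕ) (τ : CS m) : Submodule ℂ (CS m) :=
  ⨅ L : {L : List (Fin m) // L.length ≤ k}, LinearMap.ker (fderiv ℂ (cL Θ w L.1) τ).toLinearMap

lemma mem_KK {Θ : (Fin m → ℕ) → CS m → ℂ} {w : Fin m → ℂ} {k : ℕ} {τ v : CS m} :
    v ∈ KK Θ w k τ ↔ ∀ L : List (Fin m), L.length ≤ k → fderiv ℂ (cL Θ w L) τ v = 0 := by
  simp [KK, Submodule.mem_iInf]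

variable {M : Set (CS m)} {d : DefData m} {q : CS m}

lemma DefData.good (hd : d.IsDefiningSeriesOf M) : Good d.Θ (2 * d.r) d.C :=
  ⟨by linarith [hd.1], hd.2.2.1, hd.2.2.2.1⟩

lemma thB_base (hd : d.IsDefiningSeriesOf M) (hq : q ∈ M) (hqb : q ∈ ball (0 : CS m) d.r) :
    thB d.Θ (q.1, conjCS q) = q.2 := by
  change ThetaBar d.Θ q.1 (conjCS q) = q.2
  rw [thetaBar_eq, conjCS_conjCS, ← (hd.2.2.2.2.2 q hqb).1 hq, Complex.conj_conj]

lemma norm_q_lt (hd : d.IsDefiningSeriesOf M) (hqb : q ∈ ball (0 : CS m) d.r) : ‖q‖ < 2 * d.r := by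
  rw [mem_ball_zero_iff] at hqb; linarith [hd.1]

lemma pt_tendsto (hd : d.IsDefiningSeriesOf M) (hq : q ∈ M) (hqb : q ∈ ball (0 : CS m) d.r) :
    Tendsto (fun τ : CS m => ((q.1, cL d.Θ q.1 [] τ) : CS m)) (𝓝 (conjCS q)) (𝓝 q) := by
  have hqn := norm_q_lt hd hqb
  have hc : ContinuousAt (cL d.Θ q.1 []) (conjCS q) :=
    (cL_hasFDerivAt (DefData.good hd) ((norm_fst_le q).trans_lt hqn) (by rwa [norm_conjCS]) []).continuousAt
  have : ContinuousAt (fun τ : CS m => ((q.1, cL d.Θ q.1 [] τ) : CS m)) (conjCS q) :=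
    continuousAt_const.prodMk hc
  have e : cL d.Θ q.1 [] (conjCS q) = q.2 := thB_base hd hq hqb
  have h := this.tendsto
  rw [e] at h
  exact h

lemma vert_eq (hM : IsRealAnalyticHypersurface M) (hd : d.IsDefiningSeriesOf M) (hq : q ∈ M)
    (hqb : q ∈ ball (0 : CS m) d.r) : ∀ᶠ τ in 𝓝 (conjCS q),
    τ.2 = thS d.Θ (τ.1, (q.1, cL d.Θ q.1 [] τ)) ∧
    ∀ v : CS m, fderiv ℂ (cL d.Θ q.1 []) τ v = 0 →
      v.2 = fderiv ℂ (thS d.Θ) (τ.1, (q.1, cL d.Θ q.1 [] τ)) (v.1, 0) := by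
  have hg := DefData.good hd
  have hqn := norm_q_lt hd hqb
  have hpt := pt_tendsto hd hq hqb
  have h1 : ∀ᶠ τ in 𝓝 (conjCS q), τ.2 = thS d.Θ (τ.1, (q.1, cL d.Θ q.1 [] τ)) := by
    filter_upwards [(hpt.prodMk_nhds tendsto_id).eventually (reality hM hd hq hqb)] with τ hτ
    exact hτ.2 rfl
  have h2 : ∀ᶠ τ in 𝓝 (conjCS q), ‖τ‖ < 2 * d.r := by
    have : ContinuousAt (fun τ : CS m => ‖τ‖) (conjCS q) := by fun_prop
    exact this.eventually_lt continuousAt_const (by rwa [norm_conjCS])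
  have h3 : ∀ᶠ τ in 𝓝 (conjCS q), ‖((q.1, cL d.Θ q.1 [] τ) : CS m)‖ < 2 * d.r :=
    hpt.norm.eventually_lt_const hqn
  filter_upwards [h1.eventually_nhds, h2, h3] with τ a1 a2 a3
  refine ⟨a1.self_of_nhds, fun v hv => ?_⟩
  have b1 := (cL_hasFDerivAt hg ((norm_fst_le q).trans_lt hqn) a2 []).differentiableAt.hasFDerivAt
  have b2 : HasFDerivAt (thS d.Θ) (fderiv ℂ (thS d.Θ) (τ.1, (q.1, cL d.Θ q.1 [] τ)))
      (τ.1, (q.1, cL d.Θ q.1 [] τ)) :=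
    (hg.diffS.differentiableAt (isOpen_ball.mem_nhds (by
      rw [mem_ball_zero_iff, Prod.norm_mk]
      exact max_lt ((norm_fst_le τ).trans_lt a2) a3))).hasFDerivAt
  have b3 := HasFDerivAt.comp τ (f := fun τ : CS m => (τ.1, (q.1, cL d.Θ q.1 [] τ))) b2
    (hasFDerivAt_fst.prodMk ((hasFDerivAt_const q.1 τ).prodMk b1))
  have b4 := (b3.congr_of_eventuallyEq a1).unique hasFDerivAt_snd
  have b5 := DFunLike.congr_fun b4 v
  simp [hv] at b5
  exact b5.symm

lemma cL_nil_ne (hM : IsRealAnalyticHypersurface M) (hd : d.IsDefiningSeriesOf M) (hq : q ∈ M)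
    (hqb : q ∈ ball (0 : CS m) d.r) : fderiv ℂ (cL d.Θ q.1 []) (conjCS q) ≠ 0 := by
  intro h
  have := (vert_eq hM hd hq hqb).self_of_nhds.2 (0, 1) (by rw [h]; rfl)
  rw [show (((0 : Fin m → ℂ), (0 : CS m)) : (Fin m → ℂ) × CS m) = 0 from rfl, map_zero] at this
  exact one_ne_zero this

lemma finrank_KK (hM : IsRealAnalyticHypersurface M) (hd : d.IsDefiningSeriesOf M) (hq : q ∈ M)
    (hqb : q ∈ ball (0 : CS m) d.r) {χ k : ℕ} (hconst : SegreConstRankNear d.Θ k (m + 1 + χ) q) :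
    ∀ᶠ τ in 𝓝 (conjCS q), Module.finrank ℂ (KK d.Θ q.1 k τ) = m - χ := by
  have hg := DefData.good hd
  have hqn := norm_q_lt hd hqb
  have hpt := pt_tendsto hd hq hqb
  have h2 : ∀ᶠ τ in 𝓝 (conjCS q), ‖τ‖ < 2 * d.r := by
    have : ContinuousAt (fun τ : CS m => ‖τ‖) (conjCS q) := by fun_prop
    exact this.eventually_lt continuousAt_const (by rwa [norm_conjCS])
  have h3 : ∀ᶠ τ in 𝓝 (conjCS q), ‖((q.1, cL d.Θ q.1 [] τ) : CS m)‖ < 2 * d.r :=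
    hpt.norm.eventually_lt_const hqn
  have hfst : Tendsto (fun τ : CS m => τ.1) (𝓝 (conjCS q)) (𝓝 (conjW q.1)) :=
    (continuous_fst.tendsto (conjCS q))
  have h4 := (hpt.prodMk_nhds hfst).eventually hconst
  filter_upwards [h2, h3, h4, vert_eq hM hd hq hqb] with τ a2 a3 a4 a5
  obtain ⟨a5, a6⟩ := a5
  set p : CS m × (Fin m → ℂ) := (((q.1, cL d.Θ q.1 [] τ) : CS m), τ.1) with hp
  have hS : ThetaSum d.Θ τ.1 (q.1, cL d.Θ q.1 [] τ) = τ.2 := a5.symm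
  have hker : ∀ v, fderiv ℂ (segreJetMap d.Θ k) p v = 0 ↔ v.1 = 0 ∧
      ((v.2, fderiv ℂ (thS d.Θ) (τ.1, (q.1, cL d.Θ q.1 [] τ)) (v.2, 0)) : CS m) ∈ KK d.Θ q.1 k τ := by
    intro v
    rw [jet_ker hg k p a3 ((norm_fst_le τ).trans_lt a2) (by
      simp only [hp, hS]; exact (norm_snd_le τ).trans_lt a2) v, mem_KK]
    refine and_congr_right fun _ => forall_congr' fun L => forall_congr' fun hL => ?_
    rw [(cL_hasFDerivAt hg ((norm_fst_le q).trans_lt hqn) a2 L).fderiv]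
    simp only [hp, hS]
    rfl
  let T : CS m × (Fin m → ℂ) →ₗ[ℂ] CS m :=
    (LinearMap.snd ℂ _ _).prod ((fderiv ℂ (thS d.Θ) (τ.1, (q.1, cL d.Θ q.1 [] τ))).toLinearMap ∘ₗ
      (LinearMap.inl ℂ _ _) ∘ₗ (LinearMap.snd ℂ _ _))
  have hT : ∀ v, T v = (v.2, fderiv ℂ (thS d.Θ) (τ.1, (q.1, cL d.Θ q.1 [] τ)) (v.2, 0)) := fun v => rfl
  set Kr := LinearMap.ker (fderiv ℂ (segreJetMap d.Θ k) p).toLinearMap with hKr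
  have hr : LinearMap.range (T.domRestrict Kr) = KK d.Θ q.1 k τ := by
    ext v
    constructor
    · rintro ⟨⟨u, hu⟩, rfl⟩
      exact ((hker u).1 hu).2
    · intro hv
      have e : v.2 = _ := a6 v (mem_KK.1 hv [] (by simp))
      have e2 : T (0, v.1) = v := by
        rw [hT]; exact Prod.ext rfl e.symm
      refine ⟨⟨(0, v.1), (hker _).2 ⟨rfl, ?_⟩⟩, e2⟩
      rw [← hT, e2]; exact hv
  have hinj : Function.Injective (T.domRestrict Kr) := by
    rw [← LinearMap.ker_eq_bot, LinearMap.ker_eq_bot']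
    rintro ⟨u, hu⟩ h0
    have e1 := ((hker u).1 hu).1
    have e2 : u.2 = 0 := congrArg Prod.fst h0
    exact Subtype.ext (Prod.ext e1 e2)
  have hf := LinearMap.finrank_range_of_inj hinj
  rw [hr] at hf
  have hrn := LinearMap.finrank_range_add_finrank_ker (fderiv ℂ (segreJetMap d.Θ k) p).toLinearMap
  have a4' : Module.finrank ℂ (LinearMap.range (fderiv ℂ (segreJetMap d.Θ k) p).toLinearMap) = m + 1 + χ := a4
  rw [a4', ← hKr, ← hf] at hrn
  simp at hrn
  omega

end RankStep

section LinAlg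

lemma adapted_coords {m χ : ℕ} {V : Type} [AddCommGroup V] [Module ℂ V] [FiniteDimensional ℂ V]
    (hV : Module.finrank ℂ V = m + 1) (hχ : χ ≤ m) {ι : Type} (α : ι → V →ₗ[ℂ] ℂ) (i0 : ι)
    (h0 : α i0 ≠ 0) (hK : Module.finrank ℂ (⨅ i, LinearMap.ker (α i) : Submodule ℂ V) = m - χ) :
    ∃ (A : V ≃ₗ[ℂ] CS m) (σ : Fin m → ι), (∀ v, (A v).2 = α i0 v) ∧
      ∀ i : Fin m, (i : ℕ) < χ → ∀ v, (A v).1 i = α (σ i) v := by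
  classical
  set K : Submodule ℂ V := ⨅ i, LinearMap.ker (α i) with hKdef
  have memK : ∀ v, v ∈ K ↔ ∀ i, α i v = 0 := by intro v; simp [hKdef, Submodule.mem_iInf]
  let Φ : Submodule ℂ (Module.Dual ℂ V) := Submodule.span ℂ (range α)
  have hΦ : Φ.dualCoannihilator = K := by
    ext v
    rw [Submodule.mem_dualCoannihilator, memK]
    constructor
    · intro h i
      exact h _ (Submodule.subset_span ⟨i, rfl⟩)
    · intro h φ hφ
      induction hφ using Submodule.span_induction with
      | mem x hx => obtain ⟨i, rfl⟩ := hx; exact h i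
      | zero => rfl
      | add x y _ _ h1 h2 => rw [LinearMap.add_apply, h1, h2, add_zero]
      | smul a x _ h1 => rw [LinearMap.smul_apply, h1, smul_zero]
  have hfin : Module.finrank ℂ Φ = χ + 1 := by
    have := Subspace.finrank_add_finrank_dualCoannihilator_eq Φ
    rw [hΦ, hK, hV] at this
    omega
  obtain ⟨b, hbt, hsb, htb, hlin⟩ := exists_linearIndepOn_id_extension (K := ℂ)
    (s := {α i0}) (t := range α) (by
      rw [linearIndepOn_singleton_iff]; exact h0) (by rintro _ rfl; exact ⟨i0, rfl⟩)
  have hspan : Submodule.span ℂ b = Φ :=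
    le_antisymm (Submodule.span_mono hbt) (Submodule.span_le.2 htb)
  have hbf : b.Finite := LinearIndependent.setFinite hlin
  have hcard : hbf.toFinset.card = χ + 1 := by
    have h1 := finrank_span_finset_eq_card (R := ℂ) (s := hbf.toFinset) (by
      have : (hbf.toFinset : Set (Module.Dual ℂ V)) = b := hbf.coe_toFinset
      rw [LinearIndepOn, this]; exact hlin)
    rw [hbf.coe_toFinset, hspan, hfin] at h1
    exact h1.symm
  have hmem0 : α i0 ∈ hbf.toFinset := by rw [Set.Finite.mem_toFinset]; exact hsb rfl
  set b' := hbf.toFinset.erase (α i0) with hb'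
  have hcard' : b'.card = χ := by rw [hb', Finset.card_erase_of_mem hmem0, hcard]; rfl
  let e : Fin χ ≃ b' := (Fintype.equivFinOfCardEq (by simpa using hcard')).symm
  have hpre : ∀ j : Fin χ, ∃ i, α i = (e j : Module.Dual ℂ V) := by
    intro j
    have h1 : (e j : Module.Dual ℂ V) ∈ hbf.toFinset := Finset.mem_of_mem_erase (e j).2
    rw [Set.Finite.mem_toFinset] at h1
    exact hbt h1
  choose s hs using hpre
  obtain ⟨P, hP⟩ := LinearMap.exists_leftInverse_of_injective K.subtype (Submodule.ker_subtype K)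
  let φ : K ≃ₗ[ℂ] (Fin (m - χ) → ℂ) := (Module.finBasisOfFinrankEq ℂ K hK).equivFun
  let γ : Fin m → V →ₗ[ℂ] ℂ := fun i =>
    if h : (i : ℕ) < χ then α (s ⟨i, h⟩)
    else (LinearMap.proj (⟨(i : ℕ) - χ, by omega⟩ : Fin (m - χ))) ∘ₗ φ.toLinearMap ∘ₗ P
  let A0 : V →ₗ[ℂ] CS m := (LinearMap.pi γ).prod (α i0)
  have hinj : Function.Injective A0 := by
    rw [← LinearMap.ker_eq_bot, LinearMap.ker_eq_bot']
    intro v hv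
    have hv0 : α i0 v = 0 := congrArg Prod.snd hv
    have hvi : ∀ i, γ i v = 0 := fun i => congrFun (congrArg Prod.fst hv) i
    have hb0 : ∀ x ∈ b, x v = 0 := by
      intro x hx
      by_cases hx0 : x = α i0
      · rw [hx0, hv0]
      · have hxb : x ∈ b' := by
          rw [hb', Finset.mem_erase, Set.Finite.mem_toFinset]; exact ⟨hx0, hx⟩
        have h1 := hvi ⟨(e.symm ⟨x, hxb⟩ : Fin χ), lt_of_lt_of_le (Fin.is_lt _) hχ⟩
        simp only [γ, Fin.is_lt, dif_pos, Fin.eta] at h1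
        rw [hs, Equiv.apply_symm_apply] at h1
        exact h1
    have hvK : v ∈ K := by
      rw [memK]
      intro i
      have : α i ∈ Submodule.span ℂ b := htb ⟨i, rfl⟩
      generalize α i = x at this ⊢
      induction this using Submodule.span_induction with
      | mem x hx => exact hb0 x hx
      | zero => rfl
      | add x y _ _ h1 h2 => rw [LinearMap.add_apply, h1, h2, add_zero]
      | smul a x _ h1 => rw [LinearMap.smul_apply, h1, smul_zero]
    have hPv : P v = ⟨v, hvK⟩ := LinearMap.congr_fun hP ⟨v, hvK⟩
    have hφ : φ ⟨v, hvK⟩ = 0 := by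
      funext j
      have h1 := hvi ⟨(j : ℕ) + χ, by omega⟩
      simp only [γ, show ¬ ((j : ℕ) + χ < χ) by omega, dif_neg, not_false_eq_true] at h1
      simp only [LinearMap.comp_apply, hPv, LinearMap.proj_apply, Nat.add_sub_cancel] at h1
      exact h1
    have := (map_eq_zero_iff φ φ.injective).1 hφ
    exact congrArg Subtype.val this
  let A : V ≃ₗ[ℂ] CS m := A0.linearEquivOfInjective hinj (by rw [hV]; simp)
  refine ⟨A, fun i => if h : (i : ℕ) < χ then s ⟨i, h⟩ else i0, fun v => rfl, fun i hi v => ?_⟩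
  change γ i v = _
  simp [γ, hi]

end LinAlg

section Straight
variable {m : ℕ}

/-- Projection killing the coordinates of index at least `a`. -/
def pr (m a : ℕ) : CS m →L[ℂ] CS m :=
  (ContinuousLinearMap.pi fun i : Fin m => if (i : ℕ) < a then
    (ContinuousLinearMap.proj i : (Fin m → ℂ) →L[ℂ] ℂ).comp (ContinuousLinearMap.fst ℂ _ _) else 0).prod
    (ContinuousLinearMap.snd ℂ _ _)

@[simp] lemma pr_snd (a : ℕ) (y : CS m) : (pr m a y).2 = y.2 := rfl
lemma pr_fst (a : ℕ) (y : CS m) (i : Fin m) :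
    (pr m a y).1 i = if (i : ℕ) < a then y.1 i else 0 := by
  simp only [pr, ContinuousLinearMap.prod_apply, ContinuousLinearMap.pi_apply]
  split_ifs <;> rfl

lemma norm_pr_le (a : ℕ) (y : CS m) : ‖pr m a y‖ ≤ ‖y‖ := by
  rw [Prod.norm_def]
  refine max_le ?_ (norm_snd_le y)
  rw [pi_norm_le_iff_of_nonneg (norm_nonneg _)]
  intro i
  rw [pr_fst]
  split_ifs
  · exact (norm_le_pi_norm _ i).trans (norm_fst_le y)
  · simp

lemma pr_pr (a : ℕ) (y : CS m) : pr m a (pr m a y) = pr m a y := by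
  refine Prod.ext (funext fun i => ?_) rfl
  simp only [pr_fst]; split_ifs <;> rfl

lemma pr_conj (a : ℕ) (y : CS m) : pr m a (conjCS y) = conjCS (pr m a y) := by
  refine Prod.ext (funext fun i => ?_) rfl
  simp only [pr_fst, conjCS, conjW]; split_ifs <;> simp

lemma finrank_ker_pr (a : ℕ) (ha : a ≤ m) :
    Module.finrank ℂ (LinearMap.ker (pr m a).toLinearMap) ≤ m - a := by
  let T : CS m →ₗ[ℂ] (Fin (m - a) → ℂ) := LinearMap.pi fun j =>
    (LinearMap.proj (⟨(j : ℕ) + a, by omega⟩ : Fin m)) ∘ₗ LinearMap.fst ℂ _ _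
  have hinj : Function.Injective (T.domRestrict (LinearMap.ker (pr m a).toLinearMap)) := by
    rw [← LinearMap.ker_eq_bot, LinearMap.ker_eq_bot']
    rintro ⟨u, hu⟩ h0
    have hu' : pr m a u = 0 := hu
    refine Subtype.ext (Prod.ext (funext fun i => ?_) ?_)
    · by_cases hi : (i : ℕ) < a
      · have := congrFun (congrArg Prod.fst hu') i
        rw [pr_fst, if_pos hi] at this
        exact this
      · have := congrFun h0 ⟨(i : ℕ) - a, by omega⟩
        change u.1 _ = 0 at this
        simp only [show (i : ℕ) - a + a = i by omega] at this
        exact this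
    · have h2 := congrArg Prod.snd hu'
      exact h2
  have := LinearMap.finrank_le_finrank_of_injective hinj
  simpa using this

lemma dl_sub {E : Type} [NormedAddCommGroup E] [NormedSpace ℂ E] [FiniteDimensional ℂ E]
    {U : Set E} (hU : IsOpen U) {f g : E → ℂ} (hf : DifferentiableOn ℂ f U)
    (hg : DifferentiableOn ℂ g U) (L : List E) :
    EqOn (dl L (fun x => f x - g x)) (fun x => dl L f x - dl L g x) U := by
  induction L with
  | nil => exact fun _ _ => rfl
  | cons v L ih =>
    intro x hx
    simp only [dl_cons]
    rw [(ih.eventuallyEq_of_mem (hU.mem_nhds hx)).fderiv_eq,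
      fderiv_fun_sub ((dl_diff hU hf L).differentiableAt (hU.mem_nhds hx))
      ((dl_diff hU hg L).differentiableAt (hU.mem_nhds hx))]
    rfl

lemma const_along {f : CS m → ℂ} {ρ : ℝ} {a : ℕ}
    (hf : ∀ y ∈ ball (0 : CS m) ρ, DifferentiableAt ℂ f y)
    (h0 : ∀ y ∈ ball (0 : CS m) ρ, ∀ v, pr m a v = 0 → fderiv ℂ f y v = 0) :
    ∀ y ∈ ball (0 : CS m) ρ, f y = f (pr m a y) := by
  intro y hy
  set x := pr m a y with hx
  have hxb : x ∈ ball (0 : CS m) ρ := by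
    rw [mem_ball_zero_iff] at *; exact (norm_pr_le a y).trans_lt hy
  have hv : pr m a (y - x) = 0 := by rw [map_sub, hx, pr_pr, sub_self]
  have hseg : ∀ s ∈ Icc (0 : ℝ) 1, x + (s : ℂ) • (y - x) ∈ ball (0 : CS m) ρ := by
    intro s hs
    have := (convex_ball (0 : CS m) ρ).add_smul_sub_mem hxb hy hs
    simpa using this
  have hd : ∀ s ∈ Icc (0 : ℝ) 1, HasDerivAt (fun s : ℝ => f (x + (s : ℂ) • (y - x))) 0 s := by
    intro s hs
    have h1 := line_hasDerivAt (v := y - x) (l := (s : ℂ)) (x := x) (hf _ (hseg s hs))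
    rw [h0 _ (hseg s hs) _ hv] at h1
    exact h1.comp_ofReal
  have := constant_of_has_deriv_right_zero (f := fun s : ℝ => f (x + (s : ℂ) • (y - x)))
    (a := 0) (b := 1) (fun s hs => (hd s hs).continuousAt.continuousWithinAt)
    (fun s hs => (hd s (Ico_subset_Icc_self hs)).hasDerivWithinAt) 1 (by simp)
  simpa using this

lemma span_single : ⊤ ≤ Submodule.span ℂ (range fun i : Fin m => (Pi.single i 1 : Fin m → ℂ)) := by
  have := (Pi.basisFun ℂ (Fin m)).span_eq
  rw [← this]
  apply Submodule.span_mono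
  rintro _ ⟨i, rfl⟩
  exact ⟨i, by simp⟩

lemma map_ep (L : List (Fin m)) : L.map ep =
    (L.map fun i : Fin m => (Pi.single i 1 : Fin m → ℂ)).map fun v => (v, (0 : CS m)) := by
  simp [ep, Function.comp_def]

lemma inv_from_jets {Θ : (Fin m → ℕ) → CS m → ℂ} {R C : ℝ} (h : Good Θ R C) {w : Fin m → ℂ}
    (hw : ‖w‖ < R) {τ τ' : CS m} (hτ : ‖τ‖ < R) (hτ' : ‖τ'‖ < R)
    (heq : ∀ L, cL Θ w L τ = cL Θ w L τ') :
    ∀ y ∈ ball w (R - ‖w‖), thB Θ (y, τ) = thB Θ (y, τ') := by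
  have hsub : ∀ y ∈ ball w (R - ‖w‖), ‖y‖ < R := by
    intro y hy
    rw [mem_ball_iff_norm] at hy
    have := norm_le_norm_add_norm_sub' y w
    linarith
  have hmem : ∀ y ∈ ball w (R - ‖w‖), ∀ s : CS m, ‖s‖ < R → (y, s) ∈ ball (0 : (Fin m → ℂ) × CS m) R := by
    intro y hy s hs
    rw [mem_ball_zero_iff, Prod.norm_mk]; exact max_lt (hsub y hy) hs
  have hd : ∀ s : CS m, ‖s‖ < R → DifferentiableOn ℂ (fun y => thB Θ (y, s)) (ball w (R - ‖w‖)) :=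
    fun s hs => h.diffB.comp (by fun_prop) fun y hy => hmem y hy s hs
  have hpos : 0 < R - ‖w‖ := by linarith
  have key := eq_zero_of_dl_basis (fun i : Fin m => (Pi.single i 1 : Fin m → ℂ)) span_single hpos
    ((hd τ hτ).sub (hd τ' hτ')) (fun L => by
      have h1 := dl_sub isOpen_ball (hd τ hτ) (hd τ' hτ')
        (L.map fun i : Fin m => (Pi.single i 1 : Fin m → ℂ)) (mem_ball_self hpos)
      refine h1.trans ?_
      simp only
      rw [dl_slice isOpen_ball h.diffB _ τ w (hmem w (mem_ball_self hpos) τ hτ),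
        dl_slice isOpen_ball h.diffB _ τ' w (hmem w (mem_ball_self hpos) τ' hτ'), ← map_ep]
      exact sub_eq_zero.2 (heq L))
  intro y hy
  exact sub_eq_zero.1 (key y hy)

end Straight

section Straight2
variable {m : ℕ} {M : Set (CS m)} {d : DefData m} {q : CS m}

/-- The straightening data. -/
structure StrData (d : DefData m) (q : CS m) (χ : ℕ) (G Γ : CS m → CS m) (σ : Fin m → List (Fin m)) :
    Prop where
  G0 : G (conjCS q) = 0
  Γ0 : Γ 0 = conjCS q
  Gd : ∀ᶠ y in 𝓝 (conjCS q), DifferentiableAt ℂ G y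
  Γd : ∀ᶠ y in 𝓝 (0 : CS m), DifferentiableAt ℂ Γ y
  ΓG : ∀ᶠ y in 𝓝 (conjCS q), Γ (G y) = y
  GΓ : ∀ᶠ y in 𝓝 (0 : CS m), G (Γ y) = y
  G2 : ∀ y, (G y).2 = cL d.Θ q.1 [] y - q.2
  G1 : ∀ y, ∀ i : Fin m, (i : ℕ) < χ → (G y).1 i = cL d.Θ q.1 (σ i) y - cL d.Θ q.1 (σ i) (conjCS q)

lemma exists_str (hM : IsRealAnalyticHypersurface M) (hd : d.IsDefiningSeriesOf M) (hq : q ∈ M)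
    (hqb : q ∈ ball (0 : CS m) d.r) {χ k₀ : ℕ} (hχ : χ ≤ m)
    (hconst : SegreConstRankNear d.Θ k₀ (m + 1 + χ) q) :
    ∃ G Γ σ, StrData d q χ G Γ σ ∧ ∀ i, (σ i).length ≤ k₀ := by
  have hg := DefData.good hd
  have hqn := norm_q_lt hd hqb
  have hqn' : ‖conjCS q‖ < 2 * d.r := by rwa [norm_conjCS]
  have hwn : ‖q.1‖ < 2 * d.r := (norm_fst_le q).trans_lt hqn
  obtain ⟨A, σ, hA2, hA1⟩ := adapted_coords (m := m) (χ := χ) (V := CS m) (by simp) hχ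
    (fun L : {L : List (Fin m) // L.length ≤ k₀} => (fderiv ℂ (cL d.Θ q.1 L.1) (conjCS q)).toLinearMap)
    ⟨[], by simp⟩ (by
      intro h
      apply cL_nil_ne hM hd hq hqb
      exact ContinuousLinearMap.ext fun v => LinearMap.congr_fun h v)
    (finrank_KK hM hd hq hqb hconst).self_of_nhds
  let A' : CS m ≃L[ℂ] CS m := A.toContinuousLinearEquiv
  let G : CS m → CS m := fun τ => ((fun i => if (i : ℕ) < χ then
      cL d.Θ q.1 (σ i).1 τ - cL d.Θ q.1 (σ i).1 (conjCS q) else (A' τ).1 i - (A' (conjCS q)).1 i),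
    cL d.Θ q.1 [] τ - q.2)
  have hG0 : G (conjCS q) = 0 := by
    refine Prod.ext (funext fun i => ?_) ?_
    · simp only [G]; split_ifs <;> simp
    · have : cL d.Θ q.1 [] (conjCS q) = q.2 := thB_base hd hq hqb
      simp [G, this]
  have hGd : DifferentiableOn ℂ G (ball 0 (2 * d.r)) := by
    refine DifferentiableOn.prodMk ?_ ((cL_diff hg hwn []).sub_const _)
    rw [differentiableOn_pi]
    intro i
    split_ifs
    · exact (cL_diff hg hwn _).sub_const _
    · refine DifferentiableOn.sub_const ?_ _
      have : (fun x => (A' x).1 i) = (ContinuousLinearMap.proj i : (Fin m → ℂ) →L[ℂ] ℂ).comp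
        ((ContinuousLinearMap.fst ℂ _ _).comp (A' : CS m →L[ℂ] CS m)) := rfl
      rw [this]
      exact ContinuousLinearMap.differentiableOn _
  have hmem : conjCS q ∈ ball (0 : CS m) (2 * d.r) := by rwa [mem_ball_zero_iff]
  have hGA : HasFDerivAt G (A' : CS m →L[ℂ] CS m) (conjCS q) := by
    have e : (A' : CS m →L[ℂ] CS m) = (ContinuousLinearMap.pi fun i : Fin m =>
        (ContinuousLinearMap.proj i : (Fin m → ℂ) →L[ℂ] ℂ).comp
        ((ContinuousLinearMap.fst ℂ _ _).comp (A' : CS m →L[ℂ] CS m))).prod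
        ((ContinuousLinearMap.snd ℂ _ _).comp (A' : CS m →L[ℂ] CS m)) := rfl
    rw [e]
    refine HasFDerivAt.prodMk (hasFDerivAt_pi.2 fun i => ?_) ?_
    · split_ifs with hi
      · have h1 := ((cL_hasFDerivAt hg hwn hqn' (σ i).1).differentiableAt.hasFDerivAt).sub_const
          (cL d.Θ q.1 (σ i).1 (conjCS q))
        refine h1.congr_fderiv (ContinuousLinearMap.ext fun v => ?_)
        exact (hA1 i hi v).symm
      · refine HasFDerivAt.sub_const _ ?_
        exact ((ContinuousLinearMap.proj i : (Fin m → ℂ) →L[ℂ] ℂ).comp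
        ((ContinuousLinearMap.fst ℂ _ _).comp (A' : CS m →L[ℂ] CS m))).hasFDerivAt
    · have h1 := ((cL_hasFDerivAt hg hwn hqn' []).differentiableAt.hasFDerivAt).sub_const q.2
      refine h1.congr_fderiv (ContinuousLinearMap.ext fun v => ?_)
      exact (hA2 v).symm
  have hcd : ContDiffAt ℂ 1 G (conjCS q) := contDiffAt_of_diff isOpen_ball hGd 1 hmem
  have hst := hcd.hasStrictFDerivAt' hGA (by simp)
  have hΓ0 := hst.localInverse_apply_image
  have hΓc := hcd.to_localInverse hGA (by simp)
  have hGΓ := hst.eventually_right_inverse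
  rw [hG0] at hΓ0 hΓc hGΓ
  refine ⟨G, hst.localInverse G A' (conjCS q), fun i => (σ i).1, ⟨hG0, hΓ0, ?_, ?_,
    hst.eventually_left_inverse, hGΓ, fun y => rfl, fun y i hi => ?_⟩, fun i => (σ i).2⟩
  · filter_upwards [isOpen_ball.mem_nhds hmem] with y hy
    exact hGd.differentiableAt (isOpen_ball.mem_nhds hy)
  · have := hΓc.eventually (by simp)
    filter_upwards [this] with y hy
    exact hy.differentiableAt (by simp)
  · simp [G, hi]

lemma StrData.inv {χ k₀ : ℕ} {G Γ : CS m → CS m} {σ : Fin m → List (Fin m)}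
    (hs : StrData d q χ G Γ σ) (hσ : ∀ i, (σ i).length ≤ k₀)
    (hM : IsRealAnalyticHypersurface M) (hd : d.IsDefiningSeriesOf M) (hq : q ∈ M)
    (hqb : q ∈ ball (0 : CS m) d.r) (hχ : χ ≤ m)
    (hconst : ∀ k ≥ k₀, SegreConstRankNear d.Θ k (m + 1 + χ) q) :
    ∀ᶠ p : (Fin m → ℂ) × CS m in 𝓝 (q.1, 0),
      thB d.Θ (p.1, Γ p.2) = thB d.Θ (p.1, Γ (pr m χ p.2)) := by
  have hg := DefData.good hd
  have hqn := norm_q_lt hd hqb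
  have hqn' : ‖conjCS q‖ < 2 * d.r := by rwa [norm_conjCS]
  have hwn : ‖q.1‖ < 2 * d.r := (norm_fst_le q).trans_lt hqn
  have hΓc : Tendsto Γ (𝓝 0) (𝓝 (conjCS q)) := by
    have := hs.Γd.self_of_nhds.continuousAt.tendsto
    rwa [hs.Γ0] at this
  have hΓn : ∀ᶠ y in 𝓝 (0 : CS m), ‖Γ y‖ < 2 * d.r := hΓc.norm.eventually_lt_const hqn'
  -- infinitesimal invariance
  have hinf : ∀ L, ∀ᶠ y in 𝓝 (0 : CS m), ∀ v, pr m χ v = 0 →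
      fderiv ℂ (fun y => cL d.Θ q.1 L (Γ y)) y v = 0 := by
    intro L
    have hk := finrank_KK hM hd hq hqb (hconst (max k₀ L.length) (le_max_left _ _))
    filter_upwards [hΓc.eventually hk, hΓc.eventually hs.Gd, hs.Γd, hs.GΓ.eventually_nhds, hΓn]
      with y h1 h2 h3 h4 h5
    set τ := Γ y with hτ
    set D := fderiv ℂ G τ with hD
    set B := fderiv ℂ Γ y with hB
    have hDB : ∀ v, D (B v) = v := by
      intro v
      have e1 : HasFDerivAt (fun y => G (Γ y)) (D.comp B) y :=
        HasFDerivAt.comp y h2.hasFDerivAt h3.hasFDerivAt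
      have e2 := (e1.congr_of_eventuallyEq (f₁ := id) (h4.mono fun z hz => hz.symm)).unique (hasFDerivAt_id y)
      exact DFunLike.congr_fun e2 v
    have hDsurj : Function.Surjective D.toLinearMap := fun v => ⟨B v, hDB v⟩
    have hDinj : Function.Injective D.toLinearMap := LinearMap.injective_iff_surjective.2 hDsurj
    have hcd : ∀ L', HasFDerivAt (cL d.Θ q.1 L') (fderiv ℂ (cL d.Θ q.1 L') τ) τ := fun L' =>
      (cL_hasFDerivAt hg hwn h5 L').differentiableAt.hasFDerivAt
    have hD2 : ∀ u, (D u).2 = fderiv ℂ (cL d.Θ q.1 []) τ u := by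
      intro u
      have e1 : HasFDerivAt (fun y => (G y).2) ((ContinuousLinearMap.snd ℂ _ _).comp D) τ :=
        HasFDerivAt.comp τ hasFDerivAt_snd h2.hasFDerivAt
      simp only [hs.G2] at e1
      exact DFunLike.congr_fun (e1.unique ((hcd []).sub_const _)) u
    have hD1 : ∀ u, ∀ i : Fin m, (i : ℕ) < χ → (D u).1 i = fderiv ℂ (cL d.Θ q.1 (σ i)) τ u := by
      intro u i hi
      have e0 : HasFDerivAt (fun y : CS m => y.1 i) ((ContinuousLinearMap.proj i : (Fin m → ℂ) →L[ℂ] ℂ).comp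
          (ContinuousLinearMap.fst ℂ (Fin m → ℂ) ℂ)) (G τ) :=
        ContinuousLinearMap.hasFDerivAt ((ContinuousLinearMap.proj i : (Fin m → ℂ) →L[ℂ] ℂ).comp
          (ContinuousLinearMap.fst ℂ (Fin m → ℂ) ℂ))
      have e1 : HasFDerivAt (fun y => (G y).1 i) (((ContinuousLinearMap.proj i : (Fin m → ℂ) →L[ℂ] ℂ).comp
          (ContinuousLinearMap.fst ℂ (Fin m → ℂ) ℂ)).comp D) τ :=
        HasFDerivAt.comp τ e0 h2.hasFDerivAt
      simp only [hs.G1 _ i hi] at e1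
      exact DFunLike.congr_fun (e1.unique ((hcd (σ i)).sub_const _)) u
    set K := KK d.Θ q.1 (max k₀ L.length) τ with hK
    have hle : K.map D.toLinearMap ≤ LinearMap.ker (pr m χ).toLinearMap := by
      rintro _ ⟨u, hu, rfl⟩
      have hu' := mem_KK.1 hu
      refine Prod.ext (funext fun i => ?_) ?_
      · change (pr m χ (D u)).1 i = 0
        rw [pr_fst]
        split_ifs with hi
        · rw [hD1 u i hi]; exact hu' _ ((hσ i).trans (le_max_left _ _))
        · rfl
      · change (D u).2 = 0
        rw [hD2]; exact hu' [] (by simp)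
    have hfr : Module.finrank ℂ (K.map D.toLinearMap) = m - χ := by
      rw [← h1]; exact (LinearEquiv.finrank_eq (Submodule.equivMapOfInjective D.toLinearMap hDinj K)).symm
    have heq := Submodule.eq_of_le_of_finrank_le hle (by rw [hfr]; exact finrank_ker_pr χ hχ)
    intro v hv
    have hv' : v ∈ K.map D.toLinearMap := by rw [heq]; exact hv
    obtain ⟨u, hu, hu2⟩ := hv'
    have huB : B v = u := hDinj ((hDB v).trans hu2.symm)
    have e : HasFDerivAt (fun y => cL d.Θ q.1 L (Γ y)) ((fderiv ℂ (cL d.Θ q.1 L) τ).comp B) y :=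
      HasFDerivAt.comp y (hcd L) h3.hasFDerivAt
    rw [e.fderiv]
    change fderiv ℂ (cL d.Θ q.1 L) τ (B v) = 0
    rw [huB]
    exact mem_KK.1 hu L (le_max_right _ _)
  -- fixed polydisc
  obtain ⟨ρ, hρ, hρb⟩ := Metric.eventually_nhds_iff_ball.1 (hs.Γd.and hΓn)
  have hfd : ∀ L, DifferentiableOn ℂ (fun y => cL d.Θ q.1 L (Γ y)) (ball 0 ρ) := by
    intro L y hy
    exact (DifferentiableAt.comp y (g := cL d.Θ q.1 L) (f := Γ) (cL_hasFDerivAt hg hwn (hρb y hy).2 L).differentiableAt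
      (hρb y hy).1).differentiableWithinAt
  have hprb : ∀ {ρ' : ℝ}, ∀ y ∈ ball (0 : CS m) ρ', pr m χ y ∈ ball (0 : CS m) ρ' := by
    intro ρ' y hy
    rw [mem_ball_zero_iff] at *; exact (norm_pr_le χ y).trans_lt hy
  have hinv : ∀ L, ∀ y ∈ ball (0 : CS m) ρ, cL d.Θ q.1 L (Γ y) = cL d.Θ q.1 L (Γ (pr m χ y)) := by
    intro L
    have hloc : ∀ᶠ y in 𝓝 (0 : CS m), cL d.Θ q.1 L (Γ y) - cL d.Θ q.1 L (Γ (pr m χ y)) = 0 := by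
      obtain ⟨ρ', hρ', hb'⟩ := Metric.eventually_nhds_iff_ball.1 ((hinf L).and (hs.Γd.and hΓn))
      have := const_along (f := fun y => cL d.Θ q.1 L (Γ y)) (ρ := ρ') (a := χ)
        (fun y hy => DifferentiableAt.comp y (g := cL d.Θ q.1 L) (f := Γ) (cL_hasFDerivAt hg hwn (hb' y hy).2.2 L).differentiableAt
          (hb' y hy).2.1) (fun y hy => (hb' y hy).1)
      filter_upwards [ball_mem_nhds _ hρ'] with y hy
      exact sub_eq_zero.2 (this y hy)
    have := eq_zero_of_eventually (R := ρ)
      (f := fun y => cL d.Θ q.1 L (Γ y) - cL d.Θ q.1 L (Γ (pr m χ y)))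
      ((hfd L).sub ((hfd L).comp (pr m χ).differentiableOn hprb)) hloc
    exact fun y hy => sub_eq_zero.1 (this y hy)
  have hpos : 0 < 2 * d.r - ‖q.1‖ := by linarith
  have hN : ball q.1 (2 * d.r - ‖q.1‖) ×ˢ ball (0 : CS m) ρ ∈ 𝓝 (q.1, (0 : CS m)) :=
    prod_mem_nhds (ball_mem_nhds _ hpos) (ball_mem_nhds _ hρ)
  filter_upwards [hN] with p hp
  exact inv_from_jets hg hwn (hρb _ hp.2).2 (hρb _ (hprb _ hp.2)).2 (fun L => hinv L _ hp.2) _ hp.1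

end Straight2

section Rel
variable {m : ℕ} {M : Set (CS m)} {d : DefData m} {q : CS m}

/-- conjugated map -/
def psi (Γ : CS m → CS m) (t : CS m) : CS m := conjCS (Γ (conjCS t))

/-- The straightened relation. -/
def SRel (d : DefData m) (Γ : CS m → CS m) (t τ : CS m) : Prop :=
  (psi Γ t).2 = thB d.Θ ((psi Γ t).1, Γ τ)

variable {χ k₀ : ℕ} {G Γ : CS m → CS m} {σ : Fin m → List (Fin m)}

lemma conj_tendsto (x : CS m) : Tendsto conjCS (𝓝 (conjCS x)) (𝓝 x) := by
  have := (continuous_conjCS (m := m)).tendsto (conjCS x)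
  rwa [conjCS_conjCS] at this

lemma conj_zero : conjCS (0 : CS m) = 0 := by rw [conjCS_eq_star, star_zero]

lemma conj_tendsto_zero : Tendsto (conjCS : CS m → CS m) (𝓝 0) (𝓝 0) := by
  have := conj_tendsto (0 : CS m)
  rwa [conj_zero] at this

lemma StrData.Γ_tendsto (hs : StrData d q χ G Γ σ) : Tendsto Γ (𝓝 0) (𝓝 (conjCS q)) := by
  have := hs.Γd.self_of_nhds.continuousAt.tendsto
  rwa [hs.Γ0] at this

lemma StrData.psi0 (hs : StrData d q χ G Γ σ) : psi Γ 0 = q := by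
  simp [psi, conj_zero, hs.Γ0]

lemma StrData.psi_diff (hs : StrData d q χ G Γ σ) : ∀ᶠ y in 𝓝 (0 : CS m), DifferentiableAt ℂ (psi Γ) y := by
  filter_upwards [conj_tendsto_zero.eventually hs.Γd] with y hy
  exact diffAt_star_star hy

lemma StrData.psi_tendsto (hs : StrData d q χ G Γ σ) : Tendsto (psi Γ) (𝓝 0) (𝓝 q) := by
  have := hs.psi_diff.self_of_nhds.continuousAt.tendsto
  rwa [hs.psi0] at this

lemma psi_conj (Γ : CS m → CS m) (t : CS m) : psi Γ (conjCS t) = conjCS (Γ t) := by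
  simp [psi]

lemma Γ_conj (Γ : CS m → CS m) (t : CS m) : Γ (conjCS t) = conjCS (psi Γ t) := by
  simp [psi]

lemma rel_swap (hM : IsRealAnalyticHypersurface M) (hd : d.IsDefiningSeriesOf M) (hq : q ∈ M)
    (hqb : q ∈ ball (0 : CS m) d.r) (hs : StrData d q χ G Γ σ) :
    ∀ᶠ x : CS m × CS m in 𝓝 0, (SRel d Γ x.1 x.2 ↔ SRel d Γ (conjCS x.2) (conjCS x.1)) := by
  have ht : Tendsto (fun x : CS m × CS m => (psi Γ x.1, Γ x.2)) (𝓝 0) (𝓝 (q, conjCS q)) :=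
    (hs.psi_tendsto.comp (continuous_fst.tendsto (0 : CS m × CS m))).prodMk_nhds
      (hs.Γ_tendsto.comp (continuous_snd.tendsto (0 : CS m × CS m)))
  filter_upwards [ht.eventually (reality hM hd hq hqb)] with x hx
  unfold SRel
  rw [← hx, psi_conj, Γ_conj Γ]
  change (Γ x.2).2 = ThetaSum d.Θ _ _ ↔ starRingEnd ℂ (Γ x.2).2 = ThetaBar d.Θ (conjW (Γ x.2).1) (conjCS (psi Γ x.1))
  rw [thetaBar_eq, conjW_conjW, conjCS_conjCS]
  exact (RingHom.injective (starRingEnd ℂ)).eq_iff.symm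

lemma rel_pr2 (hM : IsRealAnalyticHypersurface M) (hd : d.IsDefiningSeriesOf M) (hq : q ∈ M)
    (hqb : q ∈ ball (0 : CS m) d.r) (hs : StrData d q χ G Γ σ) (hσ : ∀ i, (σ i).length ≤ k₀)
    (hχ : χ ≤ m) (hconst : ∀ k ≥ k₀, SegreConstRankNear d.Θ k (m + 1 + χ) q) :
    ∀ᶠ x : CS m × CS m in 𝓝 0, (SRel d Γ x.1 x.2 ↔ SRel d Γ x.1 (pr m χ x.2)) := by
  have ht : Tendsto (fun x : CS m × CS m => ((psi Γ x.1).1, x.2)) (𝓝 0) (𝓝 (q.1, 0)) :=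
    ((continuous_fst.tendsto _).comp (hs.psi_tendsto.comp (continuous_fst.tendsto (0 : CS m × CS m)))).prodMk_nhds
      (continuous_snd.tendsto (0 : CS m × CS m))
  filter_upwards [ht.eventually (hs.inv hσ hM hd hq hqb hχ hconst)] with x hx
  unfold SRel
  rw [hx]

lemma rel_pr1 (hM : IsRealAnalyticHypersurface M) (hd : d.IsDefiningSeriesOf M) (hq : q ∈ M)
    (hqb : q ∈ ball (0 : CS m) d.r) (hs : StrData d q χ G Γ σ) (hσ : ∀ i, (σ i).length ≤ k₀)
    (hχ : χ ≤ m) (hconst : ∀ k ≥ k₀, SegreConstRankNear d.Θ k (m + 1 + χ) q) :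
    ∀ᶠ x : CS m × CS m in 𝓝 0, (SRel d Γ x.1 x.2 ↔ SRel d Γ (pr m χ x.1) x.2) := by
  have h1 := rel_swap hM hd hq hqb hs
  have h2 := rel_pr2 hM hd hq hqb hs hσ hχ hconst
  have t1 : Tendsto (fun x : CS m × CS m => (conjCS x.2, conjCS x.1)) (𝓝 0) (𝓝 0) :=
    (conj_tendsto_zero.comp (continuous_snd.tendsto (0 : CS m × CS m))).prodMk_nhds
      (conj_tendsto_zero.comp (continuous_fst.tendsto (0 : CS m × CS m)))
  have t2 : Tendsto (fun x : CS m × CS m => (pr m χ x.1, x.2)) (𝓝 0) (𝓝 0) := by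
    have : Continuous (fun x : CS m × CS m => (pr m χ x.1, x.2)) := by fun_prop
    simpa [← Prod.zero_eq_mk] using this.tendsto 0
  filter_upwards [h1, t1.eventually h2, t2.eventually h1] with x h1 h2 h3
  rw [h1, h2, h3, pr_conj]

/-- the `w`-part of the projection -/
def prW (m a : ℕ) (ω : Fin m → ℂ) : Fin m → ℂ := fun i => if (i : ℕ) < a then ω i else 0

lemma pr_eq (a : ℕ) (y : CS m) : pr m a y = (prW m a y.1, y.2) :=
  Prod.ext (funext fun i => pr_fst a y i) rfl

lemma continuous_prW (a : ℕ) : Continuous (prW m a) := by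
  refine continuous_pi fun i => ?_
  unfold prW
  split_ifs <;> fun_prop

lemma prW_zero (a : ℕ) : prW m a 0 = 0 := by
  funext i; simp [prW]

lemma exists_theta (hM : IsRealAnalyticHypersurface M) (hd : d.IsDefiningSeriesOf M) (hq : q ∈ M)
    (hqb : q ∈ ball (0 : CS m) d.r) (hs : StrData d q χ G Γ σ) (hσ : ∀ i, (σ i).length ≤ k₀)
    (hχ : χ ≤ m) (hconst : ∀ k ≥ k₀, SegreConstRankNear d.Θ k (m + 1 + χ) q) :
    ∃ T : (Fin m → ℂ) × CS m → ℂ, T 0 = 0 ∧ (∀ᶠ p in 𝓝 0, DifferentiableAt ℂ T p) ∧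
      (∀ᶠ x : CS m × CS m in 𝓝 0, (SRel d Γ x.1 x.2 ↔ x.2.2 = T (x.2.1, x.1))) ∧
      (∀ᶠ p in 𝓝 0, T p = T (prW m χ p.1, pr m χ p.2)) := by
  have hg := DefData.good hd
  have hqn := norm_q_lt hd hqb
  have hqn' : ‖conjCS q‖ < 2 * d.r := by rwa [norm_conjCS]
  have hwn : ‖q.1‖ < 2 * d.r := (norm_fst_le q).trans_lt hqn
  let f : ((Fin m → ℂ) × CS m) × ℂ → ℂ := fun y =>
    (psi Γ y.1.2).2 - thB d.Θ ((psi Γ y.1.2).1, Γ (y.1.1, y.2))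
  have hτ : Tendsto (fun y : ((Fin m → ℂ) × CS m) × ℂ => (y.1.1, y.2)) (𝓝 0) (𝓝 (0 : CS m)) := by
    have : Continuous (fun y : ((Fin m → ℂ) × CS m) × ℂ => (y.1.1, y.2)) := by fun_prop
    exact this.tendsto 0
  have ht : Tendsto (fun y : ((Fin m → ℂ) × CS m) × ℂ => y.1.2) (𝓝 0) (𝓝 (0 : CS m)) := by
    have : Continuous (fun y : ((Fin m → ℂ) × CS m) × ℂ => y.1.2) := by fun_prop
    exact this.tendsto 0
  have hfd : ∀ᶠ y in 𝓝 0, DifferentiableAt ℂ f y := by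
    have hn1 : ∀ᶠ y in 𝓝 (0 : CS m), ‖Γ y‖ < 2 * d.r := hs.Γ_tendsto.norm.eventually_lt_const hqn'
    have hn2 : ∀ᶠ y in 𝓝 (0 : CS m), ‖psi Γ y‖ < 2 * d.r := hs.psi_tendsto.norm.eventually_lt_const hqn
    filter_upwards [ht.eventually hn2, hτ.eventually hn1, ht.eventually hs.psi_diff, hτ.eventually hs.Γd]
      with y h1 h2 h3 h4
    have d1 : DifferentiableAt ℂ (fun y : ((Fin m → ℂ) × CS m) × ℂ => psi Γ y.1.2) y :=
      DifferentiableAt.comp y (g := psi Γ) (f := fun y : ((Fin m → ℂ) × CS m) × ℂ => y.1.2) h3 (by fun_prop)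
    have d2 : DifferentiableAt ℂ (fun y : ((Fin m → ℂ) × CS m) × ℂ => Γ (y.1.1, y.2)) y :=
      DifferentiableAt.comp y (g := Γ) (f := fun y : ((Fin m → ℂ) × CS m) × ℂ => (y.1.1, y.2)) h4 (by fun_prop)
    have d3 : DifferentiableAt ℂ (thB d.Θ) ((psi Γ y.1.2).1, Γ (y.1.1, y.2)) :=
      hg.diffB.differentiableAt (isOpen_ball.mem_nhds (by
        rw [mem_ball_zero_iff, Prod.norm_mk]
        exact max_lt ((norm_fst_le _).trans_lt h1) h2))
    exact d1.snd.sub (DifferentiableAt.comp y (g := thB d.Θ)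
      (f := fun y : ((Fin m → ℂ) × CS m) × ℂ => ((psi Γ y.1.2).1, Γ (y.1.1, y.2))) d3 (d1.fst.prodMk d2))
  have hcd : ContDiffAt ℂ 1 f 0 := contDiffAt_of_eventually hfd 1
  have hf0 : f 0 = 0 := by
    change (psi Γ 0).2 - thB d.Θ ((psi Γ 0).1, Γ 0) = 0
    rw [hs.psi0, hs.Γ0, thB_base hd hq hqb, sub_self]
  have hline : HasFDerivAt (fun ζ : ℂ => f (0, ζ)) (-(ContinuousLinearMap.id ℂ ℂ)) 0 := by
    refine ((hasFDerivAt_id (0 : ℂ)).neg).congr_of_eventuallyEq ?_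
    have hc : Tendsto (fun ζ : ℂ => ((0 : Fin m → ℂ), ζ)) (𝓝 0) (𝓝 (0 : CS m)) := by
      have : Continuous (fun ζ : ℂ => ((0 : Fin m → ℂ), ζ)) := by fun_prop
      exact this.tendsto 0
    filter_upwards [hc.eventually hs.GΓ] with ζ hζ
    have h2 := hs.G2 (Γ (0, ζ))
    rw [hζ] at h2
    have h3 : cL d.Θ q.1 [] (Γ (0, ζ)) = thB d.Θ (q.1, Γ (0, ζ)) := rfl
    rw [h3] at h2
    change (psi Γ 0).2 - thB d.Θ ((psi Γ 0).1, Γ (0, ζ)) = - ζ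
    rw [hs.psi0]
    change ζ = _ at h2
    linear_combination h2
  have hinr : fderiv ℂ f 0 ∘L .inr ℂ ((Fin m → ℂ) × CS m) ℂ = -(ContinuousLinearMap.id ℂ ℂ) := by
    have e : HasFDerivAt (fun ζ : ℂ => f (0, ζ)) (fderiv ℂ f 0 ∘L .inr ℂ ((Fin m → ℂ) × CS m) ℂ) 0 :=
      HasFDerivAt.comp (0 : ℂ) (g := f) (f := fun ζ : ℂ => ((0 : (Fin m → ℂ) × CS m), ζ))
        hfd.self_of_nhds.hasFDerivAt (ContinuousLinearMap.inr ℂ ((Fin m → ℂ) × CS m) ℂ).hasFDerivAt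
    exact e.unique hline
  have hinv : (fderiv ℂ f 0 ∘L .inr ℂ ((Fin m → ℂ) × CS m) ℂ).IsInvertible := by
    rw [hinr]
    exact ⟨ContinuousLinearEquiv.neg ℂ, by ext; simp⟩
  set T := hcd.implicitFunction (by simp) hinv with hT
  have hT0 : T 0 = 0 := hcd.implicitFunction_apply_self (by simp) hinv
  have hTd : ∀ᶠ p in 𝓝 0, DifferentiableAt ℂ T p := by
    have := (hcd.contDiffAt_implicitFunction (by simp) hinv).eventually (by simp)
    filter_upwards [this] with p hp
    exact hp.differentiableAt (by simp)
  have hTe := hcd.eventually_apply_eq_iff_implicitFunction (by simp) hinv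
  have hrel : ∀ᶠ x : CS m × CS m in 𝓝 0, (SRel d Γ x.1 x.2 ↔ x.2.2 = T (x.2.1, x.1)) := by
    have hc : Tendsto (fun x : CS m × CS m => ((x.2.1, x.1), x.2.2)) (𝓝 0) (𝓝 0) := by
      have : Continuous (fun x : CS m × CS m => ((x.2.1, x.1), x.2.2)) := by fun_prop
      exact this.tendsto 0
    filter_upwards [hc.eventually hTe] with x hx
    rw [hf0] at hx
    rw [eq_comm (a := x.2.2), ← hT] at *
    rw [← hx]
    exact sub_eq_zero.symm
  refine ⟨T, hT0, hTd, hrel, ?_⟩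
  have hc : Tendsto (fun p : (Fin m → ℂ) × CS m => (p.2, (p.1, T p))) (𝓝 0) (𝓝 (0 : CS m × CS m)) := by
    have h1 : Tendsto T (𝓝 0) (𝓝 0) := by
      have := hTd.self_of_nhds.continuousAt.tendsto
      rwa [hT0] at this
    exact (continuous_snd.tendsto (0 : (Fin m → ℂ) × CS m)).prodMk_nhds
      ((continuous_fst.tendsto (0 : (Fin m → ℂ) × CS m)).prodMk_nhds h1)
  have t2 : Tendsto (fun x : CS m × CS m => (x.1, pr m χ x.2)) (𝓝 0) (𝓝 0) := by
    have : Continuous (fun x : CS m × CS m => (x.1, pr m χ x.2)) := by fun_prop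
    simpa [← Prod.zero_eq_mk] using this.tendsto 0
  have t3 : Tendsto (fun x : CS m × CS m => (pr m χ x.1, pr m χ x.2)) (𝓝 0) (𝓝 0) := by
    have : Continuous (fun x : CS m × CS m => (pr m χ x.1, pr m χ x.2)) := by fun_prop
    simpa [← Prod.zero_eq_mk] using this.tendsto 0
  filter_upwards [hc.eventually hrel, hc.eventually (rel_pr2 hM hd hq hqb hs hσ hχ hconst),
    hc.eventually (t2.eventually (rel_pr1 hM hd hq hqb hs hσ hχ hconst)),
    hc.eventually (t3.eventually hrel)] with p h1 h2 h3 h4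
  have := h4.1 (h3.1 (h2.1 (h1.2 rfl)))
  simpa [pr_eq] using this

end Rel

section Data
variable {m : ℕ}

lemma norm_prW_le (a : ℕ) (w : Fin m → ℂ) : ‖prW m a w‖ ≤ ‖w‖ := by
  rw [pi_norm_le_iff_of_nonneg (norm_nonneg _)]
  intro i
  unfold prW
  split_ifs
  · exact norm_le_pi_norm w i
  · simp

lemma mpow_prW_zero {a : ℕ} (w : Fin m → ℂ) {β : Fin m → ℕ} (h : ∃ i : Fin m, a ≤ (i : ℕ) ∧ β i ≠ 0) :
    mpow (prW m a w) β = 0 := by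
  obtain ⟨i, hi, hb⟩ := h
  refine Finset.prod_eq_zero (Finset.mem_univ i) ?_
  simp [prW, not_lt.2 hi, hb]

lemma mpow_prW_eq {a : ℕ} (w : Fin m → ℂ) {β : Fin m → ℕ} (h : ¬ ∃ i : Fin m, a ≤ (i : ℕ) ∧ β i ≠ 0) :
    mpow (prW m a w) β = mpow w β := by
  refine Finset.prod_congr rfl fun i _ => ?_
  by_cases hi : (i : ℕ) < a
  · simp [prW, hi]
  · have : β i = 0 := by
      by_contra hb
      exact h ⟨i, not_lt.1 hi, hb⟩
    simp [this]

lemma mpow_zero_left {β : Fin m → ℕ} (h : β ≠ 0) : mpow (0 : Fin m → ℂ) β = 0 := by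
  obtain ⟨i, hi⟩ := Function.ne_iff.1 h
  exact Finset.prod_eq_zero (Finset.mem_univ i) (by simpa using hi)

lemma thetaSum_zero (Θ : (Fin m → ℕ) → CS m → ℂ) (t : CS m) : ThetaSum Θ 0 t = Θ 0 t := by
  unfold ThetaSum
  rw [tsum_eq_single 0 fun β hβ => by rw [mpow_zero_left hβ, zero_mul]]
  simp [mpow]

lemma exists_data {χ : ℕ} {T : (Fin m → ℂ) × CS m → ℂ} (hT0 : T 0 = 0)
    (hTd : ∀ᶠ p in 𝓝 0, DifferentiableAt ℂ T p)
    (hTi : ∀ᶠ p in 𝓝 0, T p = T (prW m χ p.1, pr m χ p.2)) {ρ : ℝ} (hρ : 0 < ρ) :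
    ∃ (Θ' : (Fin m → ℕ) → CS m → ℂ) (r : ℝ), r ≤ ρ ∧ Good Θ' (2 * r) 1 ∧ Θ' 0 0 = 0 ∧
      NormalFormSeries χ Θ' ∧
      ∀ ζ ∈ ball (0 : Fin m → ℂ) (2 * r), ∀ t ∈ ball (0 : CS m) (2 * r), ThetaSum Θ' ζ t = T (ζ, t) := by
  classical
  have hb : ∀ᶠ p in 𝓝 0, ‖T p‖ < 1 := by
    have := hTd.self_of_nhds.continuousAt.norm
    exact Tendsto.eventually_lt_const (by simp [hT0]) this
  obtain ⟨R₁, hR₁, hball⟩ := Metric.eventually_nhds_iff_ball.1 (hTd.and (hTi.and hb))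
  set R := min R₁ ρ with hR
  have hRpos : 0 < R := lt_min hR₁ hρ
  have hmem : ∀ p ∈ ball (0 : Fin m → ℂ) R ×ˢ ball (0 : CS m) R, p ∈ ball (0 : (Fin m → ℂ) × CS m) R₁ := by
    rintro ⟨a, b⟩ ⟨h1, h2⟩
    rw [mem_ball_zero_iff] at *
    exact max_lt (h1.trans_le (min_le_left _ _)) (h2.trans_le (min_le_left _ _))
  obtain ⟨c, hc1, hc2, hc3⟩ := exists_coeffs (B := ball (0 : CS m) R) isOpen_ball (R := R) (R' := R / 2)
    (by positivity) (by linarith) m T 1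
    (fun p hp => (hball p (hmem p hp)).1.differentiableWithinAt) (fun p hp => (hball p (hmem p hp)).2.2.le)
  have h2r : 2 * (R / 4) = R / 2 := by ring
  have hhalf : ∀ t ∈ ball (0 : CS m) (R / 2), pr m χ t ∈ ball (0 : CS m) R := by
    intro t ht
    rw [mem_ball_zero_iff] at *
    exact (norm_pr_le χ t).trans_lt (by linarith)
  let Θ' : (Fin m → ℕ) → CS m → ℂ := fun β t =>
    if (∃ i : Fin m, χ ≤ (i : ℕ) ∧ β i ≠ 0) then 0 else c β (pr m χ t)
  have hsum : ∀ ζ ∈ ball (0 : Fin m → ℂ) (R / 2), ∀ t ∈ ball (0 : CS m) (R / 2),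
      ThetaSum Θ' ζ t = T (ζ, t) := by
    intro ζ hζ t ht
    have h1 := hc3 (prW m χ ζ) (by
      rw [mem_ball_zero_iff] at *; exact (norm_prW_le χ ζ).trans_lt hζ) (pr m χ t) (hhalf t ht)
    have h2 : T (ζ, t) = T (prW m χ ζ, pr m χ t) := (hball (ζ, t) (hmem _ ⟨by
      rw [mem_ball_zero_iff] at *; linarith, by rw [mem_ball_zero_iff] at *; linarith⟩)).2.1
    rw [h2, ← h1.tsum_eq]
    unfold ThetaSum
    congr 1
    funext β
    simp only [Θ']
    split_ifs with h
    · rw [mpow_prW_zero ζ h]; simp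
    · rw [mpow_prW_eq ζ h]
  refine ⟨Θ', R / 4, ?_, ⟨by linarith, fun β => ?_, fun β t ht => ?_⟩, ?_, ⟨fun β hβ => ?_, fun β s t h1 h2 => ?_⟩, ?_⟩
  · have := min_le_right R₁ ρ
    linarith
  · rw [h2r]
    by_cases h : ∃ i : Fin m, χ ≤ (i : ℕ) ∧ β i ≠ 0
    · simp only [Θ', if_pos h]; exact differentiableOn_const _
    · simp only [Θ', if_neg h]
      exact (hc1 β).comp (pr m χ).differentiableOn hhalf
  · rw [h2r] at *
    simp only [Θ']
    split_ifs
    · rw [norm_zero]; positivity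
    · exact hc2 β _ (hhalf t ht)
  · rw [← thetaSum_zero Θ' 0, hsum 0 (mem_ball_self (by positivity)) 0 (mem_ball_self (by positivity))]
    exact hT0
  · funext t
    simp only [Θ', if_pos hβ]; rfl
  · have : pr m χ s = pr m χ t := by
      refine Prod.ext (funext fun i => ?_) h2
      rw [pr_fst, pr_fst]
      split_ifs with hi
      · exact h1 i hi
      · rfl
    simp only [Θ', this]
  · rwa [h2r]

end Data

section Reduced
variable {m a : ℕ}

/-- restriction to the first coordinates -/
def resW (h : a ≤ m) : (Fin m → ℂ) →L[ℂ] (Fin a → ℂ) :=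
  ContinuousLinearMap.pi fun i => ContinuousLinearMap.proj (Fin.castLE h i)

def resC (h : a ≤ m) : CS m →L[ℂ] CS a := (resW h).prodMap (ContinuousLinearMap.id ℂ ℂ)

lemma resW_apply (h : a ≤ m) (w : Fin m → ℂ) (i : Fin a) : resW h w i = w (Fin.castLE h i) := rfl

lemma resC_embed (h : a ≤ m) (t : CS a) : resC h (embedCS m a t) = t := by
  refine Prod.ext (funext fun i => ?_) rfl
  change (embedCS m a t).1 (Fin.castLE h i) = t.1 i
  simp [embedCS]

lemma norm_embed_le (t : CS a) : ‖embedCS m a t‖ ≤ ‖t‖ := by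
  rw [Prod.norm_def]
  refine max_le ?_ (norm_snd_le t)
  rw [pi_norm_le_iff_of_nonneg (norm_nonneg _)]
  intro i
  simp only [embedCS]
  split_ifs
  · exact (norm_le_pi_norm t.1 _).trans (norm_fst_le t)
  · simp

lemma extendIdx_castLE (h : a ≤ m) (β : Fin a → ℕ) (i : Fin a) : extendIdx m a β (Fin.castLE h i) = β i := by
  simp [extendIdx]

lemma extendIdx_inj (h : a ≤ m) : Function.Injective (extendIdx m a) := by
  intro β γ hb
  funext i
  rw [← extendIdx_castLE h β i, ← extendIdx_castLE h γ i, hb]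

lemma prod_castLE {A : Type} [CommMonoid A] (h : a ≤ m) (f : Fin m → A)
    (hf : ∀ i : Fin m, a ≤ (i : ℕ) → f i = 1) : ∏ i, f i = ∏ i : Fin a, f (Fin.castLE h i) := by
  symm
  refine Finset.prod_bij_ne_one (fun i _ _ => Fin.castLE h i) (by simp) ?_ ?_ (by simp)
  · intro i _ _ j _ _ hij
    exact Fin.castLE_injective h hij
  · intro b _ hb
    have hlt : (b : ℕ) < a := by
      by_contra hh
      exact hb (hf b (not_lt.1 hh))
    exact ⟨⟨b, hlt⟩, Finset.mem_univ _, by simpa using hb, by ext; simp⟩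

lemma mpow_extend (h : a ≤ m) (w : Fin m → ℂ) (β : Fin a → ℕ) :
    mpow w (extendIdx m a β) = mpow (resW h w) β := by
  unfold mpow
  rw [prod_castLE h]
  · refine Finset.prod_congr rfl fun i _ => ?_
    rw [extendIdx_castLE, resW_apply]
  · intro i hi
    simp [extendIdx, not_lt.2 hi]

lemma mdeg_extend (h : a ≤ m) (β : Fin a → ℕ) : mdeg (extendIdx m a β) = mdeg β := by
  have := prod_castLE (A := Multiplicative ℕ) h (fun i => Multiplicative.ofAdd (extendIdx m a β i)) (by
    intro i hi
    simp [extendIdx, not_lt.2 hi])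
  have h2 := congrArg Multiplicative.toAdd this
  simp only [toAdd_prod, toAdd_ofAdd] at h2
  unfold mdeg
  rw [h2]
  exact Finset.sum_congr rfl fun i _ => extendIdx_castLE h β i

lemma thetaSum_reduced {Θ : (Fin m → ℕ) → CS m → ℂ} (h : a ≤ m) (hN : NormalFormSeries a Θ)
    (ζ : Fin m → ℂ) (t : CS m) :
    ThetaSum Θ ζ t = ThetaSum (reducedSeries m a Θ) (resW h ζ) (resC h t) := by
  unfold ThetaSum
  rw [← (extendIdx_inj h).tsum_eq]
  · congr 1
    funext β
    rw [mpow_extend h]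
    congr 1
    refine hN.2 _ _ _ (fun i hi => ?_) rfl
    simp only [embedCS, hi, dif_pos]
    rfl
  · intro β hβ
    by_cases hb : ∃ i : Fin m, a ≤ (i : ℕ) ∧ β i ≠ 0
    · exact absurd (show mpow ζ β * Θ β t = 0 by rw [hN.1 β hb]; simp) hβ
    · refine ⟨fun i => β (Fin.castLE h i), funext fun i => ?_⟩
      simp only [extendIdx]
      split_ifs with hi
      · rfl
      · by_contra hne
        exact hb ⟨i, not_lt.1 hi, fun h0 => hne h0.symm⟩

lemma thB_reduced {Θ : (Fin m → ℕ) → CS m → ℂ} (h : a ≤ m) (hN : NormalFormSeries a Θ)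
    (p : (Fin m → ℂ) × CS m) :
    thB Θ p = thB (reducedSeries m a Θ) ((resW h).prodMap (resC h) p) := by
  change ThetaBar _ _ _ = ThetaBar _ _ _
  rw [thetaBar_eq, thetaBar_eq, thetaSum_reduced h hN]
  rfl

lemma good_reduced {Θ : (Fin m → ℕ) → CS m → ℂ} {R C : ℝ} (h : a ≤ m) (hg : Good Θ R C) :
    Good (reducedSeries m a Θ) R C := by
  have hemb : ∀ t ∈ ball (0 : CS a) R, embedCS m a t ∈ ball (0 : CS m) R := by
    intro t ht
    rw [mem_ball_zero_iff] at *
    exact (norm_embed_le t).trans_lt ht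
  have hd : Differentiable ℂ (embedCS m a) := by
    refine Differentiable.prodMk ?_ differentiable_snd
    rw [differentiable_pi]
    intro i
    split_ifs <;> fun_prop
  refine ⟨hg.1, fun β => (hg.2.1 _).comp hd.differentiableOn hemb, fun β t ht => ?_⟩
  have := hg.2.2 (extendIdx m a β) _ (hemb t ht)
  rwa [mdeg_extend h] at this

end Reduced

section Nondeg
variable {m : ℕ}

lemma swap_jet {Θ : (Fin m → ℕ) → CS m → ℂ} {R C : ℝ} (h : Good Θ R C) {w : Fin m → ℂ}
    {τ : CS m} (hw : ‖w‖ < R) (hτ : ‖τ‖ < R) (L : List (Fin m)) (v : CS m) :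
    fderiv ℂ (dl (L.map ep) (thB Θ)) (w, τ) (0, v) =
      dl (L.map fun i => (Pi.single i 1 : Fin m → ℂ)) (fun w => fderiv ℂ (thB Θ) (w, τ) (0, v)) w := by
  have hmem : (w, τ) ∈ ball (0 : (Fin m → ℂ) × CS m) R := by
    rw [mem_ball_zero_iff, Prod.norm_mk]; exact max_lt hw hτ
  have h1 : dl ((0, v) :: L.map ep) (thB Θ) (w, τ) = dl (L.map ep ++ [(0, v)]) (thB Θ) (w, τ) :=
    dl_perm isOpen_ball h.diffB (List.perm_append_singleton _ _).symm hmem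
  have h2 := dl_slice isOpen_ball (dl_diff isOpen_ball h.diffB [(0, v)])
    (L.map fun i => (Pi.single i 1 : Fin m → ℂ)) τ w hmem
  rw [← map_ep, ← dl_append] at h2
  rw [dl_cons] at h1
  exact h1.trans h2.symm

variable {M : Set (CS m)} {d : DefData m} {q : CS m}
variable {χ k₀ : ℕ} {G Γ : CS m → CS m} {σ : Fin m → List (Fin m)}

lemma srel_bar (hM : IsRealAnalyticHypersurface M) (hd : d.IsDefiningSeriesOf M) (hq : q ∈ M)
    (hqb : q ∈ ball (0 : CS m) d.r) (hs : StrData d q χ G Γ σ) {Θ' : (Fin m → ℕ) → CS m → ℂ}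
    (hrel : ∀ᶠ x : CS m × CS m in 𝓝 0, (SRel d Γ x.1 x.2 ↔ x.2.2 = thS Θ' (x.2.1, x.1))) :
    ∀ᶠ x : CS m × CS m in 𝓝 0, (SRel d Γ x.1 x.2 ↔ x.1.2 = thB Θ' (x.1.1, x.2)) := by
  have t1 : Tendsto (fun x : CS m × CS m => (conjCS x.2, conjCS x.1)) (𝓝 0) (𝓝 0) :=
    (conj_tendsto_zero.comp (continuous_snd.tendsto (0 : CS m × CS m))).prodMk_nhds
      (conj_tendsto_zero.comp (continuous_fst.tendsto (0 : CS m × CS m)))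
  filter_upwards [rel_swap hM hd hq hqb hs, t1.eventually hrel] with x h1 h2
  rw [h1, h2]
  change starRingEnd ℂ x.1.2 = ThetaSum Θ' (conjW x.1.1) (conjCS x.2) ↔ x.1.2 = ThetaBar Θ' x.1.1 x.2
  rw [thetaBar_eq, ← (RingHom.injective (starRingEnd ℂ)).eq_iff, Complex.conj_conj]

lemma nondeg_core (hM : IsRealAnalyticHypersurface M) (hd : d.IsDefiningSeriesOf M) (hq : q ∈ M)
    (hqb : q ∈ ball (0 : CS m) d.r) (hs : StrData d q χ G Γ σ) {Θ' : (Fin m → ℕ) → CS m → ℂ}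
    {R C : ℝ} (hg' : Good Θ' R C)
    (hrel : ∀ᶠ x : CS m × CS m in 𝓝 0, (SRel d Γ x.1 x.2 ↔ x.2.2 = thS Θ' (x.2.1, x.1)))
    (u : CS m) (hu : ∀ᶠ w in 𝓝 (0 : Fin m → ℂ), fderiv ℂ (thB Θ') (w, 0) (0, u) = 0) :
    pr m χ u = 0 := by
  have hg := DefData.good hd
  have hqn := norm_q_lt hd hqb
  have hqn' : ‖conjCS q‖ < 2 * d.r := by rwa [norm_conjCS]
  have hwn : ‖q.1‖ < 2 * d.r := (norm_fst_le q).trans_lt hqn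
  set v := fderiv ℂ Γ 0 u with hv
  have hbar := srel_bar hM hd hq hqb hs hrel
  have hb0 := thB_base hd hq hqb
  -- the base curve
  have htt : Tendsto (fun w : Fin m → ℂ => ((w, thB d.Θ (w, conjCS q)) : CS m)) (𝓝 q.1) (𝓝 q) := by
    have hc : ContinuousAt (thB d.Θ) (q.1, conjCS q) :=
      (hg.diffB.differentiableAt (isOpen_ball.mem_nhds (by
        rw [mem_ball_zero_iff, Prod.norm_mk]; exact max_lt hwn hqn'))).continuousAt
    have h1 : Tendsto (fun w : Fin m → ℂ => thB d.Θ (w, conjCS q)) (𝓝 q.1) (𝓝 q.2) := by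
      have := hc.tendsto
      rw [hb0] at this
      exact this.comp ((continuous_id.prodMk continuous_const).tendsto q.1)
    exact tendsto_id.prodMk_nhds h1
  have hΦt : Tendsto (psi G) (𝓝 q) (𝓝 0) := by
    have h0 := hs.Gd.self_of_nhds.continuousAt.tendsto
    rw [hs.G0] at h0
    exact conj_tendsto_zero.comp (h0.comp (continuous_conjCS.tendsto q))
  have hΨΦ : ∀ᶠ t in 𝓝 q, psi Γ (psi G t) = t := by
    filter_upwards [(continuous_conjCS.tendsto q).eventually hs.ΓG] with t ht
    simp [psi, ht]
  have hkey : ∀ᶠ w in 𝓝 q.1, fderiv ℂ (thB d.Θ) (w, conjCS q) (0, v) = 0 := by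
    have hpair : Tendsto (fun t' : CS m => (t', (0 : CS m))) (𝓝 0) (𝓝 0) :=
      (Continuous.prodMk continuous_id continuous_const).tendsto (0 : CS m)
    have hN : ∀ᶠ t' : CS m in 𝓝 0, ‖t'‖ < R := by
      filter_upwards [ball_mem_nhds (0 : CS m) hg'.1] with t' ht
      exact mem_ball_zero_iff.1 ht
    have hwlt : ∀ᶠ w in 𝓝 q.1, ‖w‖ < 2 * d.r := (continuous_norm.tendsto q.1).eventually_lt_const hwn
    have hfst : Tendsto (fun t' : CS m => t'.1) (𝓝 0) (𝓝 0) := continuous_fst.tendsto (0 : CS m)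
    have hT := hΦt.comp htt
    filter_upwards [htt.eventually hΨΦ, hT.eventually (hpair.eventually hbar),
      hT.eventually (hpair.eventually hbar.eventually_nhds), hT.eventually hN,
      hT.eventually (hfst.eventually hu), hwlt, hT.eventually hs.psi_diff] with w h1 h2 h3 h4 h5 h6 h7
    simp only [Function.comp_apply] at h2 h3 h4 h5 h7
    set t : CS m := (w, thB d.Θ (w, conjCS q)) with ht
    set t' := psi G t with ht'
    have hS0 : SRel d Γ t' 0 := by
      unfold SRel
      rw [h1, hs.Γ0]
    have ht2 : t'.2 = thB Θ' (t'.1, 0) := h2.1 hS0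
    -- the curve
    have hmem' : ((t'.1, (0 : CS m)) : (Fin m → ℂ) × CS m) ∈ ball (0 : (Fin m → ℂ) × CS m) R := by
      rw [mem_ball_zero_iff, Prod.norm_mk, norm_zero]
      exact max_lt ((norm_fst_le _).trans_lt h4) hg'.1
    have hb'd := (hg'.diffB.differentiableAt (isOpen_ball.mem_nhds hmem')).hasFDerivAt
    have hline : HasDerivAt (fun l : ℂ => l • u) u 0 := by
      simpa using (hasDerivAt_id (0 : ℂ)).smul_const u
    have hcurve0 : HasDerivAt (fun l : ℂ => thB Θ' (t'.1, l • u)) 0 0 := by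
      have e1 : HasDerivAt (fun l : ℂ => (t'.1, l • u)) (0, u) 0 := (hasDerivAt_const _ _).prodMk hline
      have e2 : HasFDerivAt (thB Θ') (fderiv ℂ (thB Θ') (t'.1, 0)) ((fun l : ℂ => (t'.1, l • u)) 0) := by
        simpa using hb'd
      have := e2.comp_hasDerivAt 0 e1
      rwa [h5] at this
    have hcurve : HasDerivAt (fun l : ℂ => ((t'.1, thB Θ' (t'.1, l • u)) : CS m)) 0 0 :=
      (hasDerivAt_const _ _).prodMk hcurve0
    have hc0 : ((t'.1, thB Θ' (t'.1, (0 : ℂ) • u)) : CS m) = t' := by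
      rw [zero_smul, ← ht2]
    have hψ : HasDerivAt (fun l : ℂ => psi Γ (t'.1, thB Θ' (t'.1, l • u))) 0 0 := by
      have e2 : HasFDerivAt (psi Γ) (fderiv ℂ (psi Γ) t')
          ((fun l : ℂ => ((t'.1, thB Θ' (t'.1, l • u)) : CS m)) 0) := by
        change HasFDerivAt (psi Γ) (fderiv ℂ (psi Γ) t') (t'.1, thB Θ' (t'.1, (0 : ℂ) • u))
        rw [hc0]; exact h7.hasFDerivAt
      have := e2.comp_hasDerivAt 0 hcurve
      rwa [map_zero] at this
    have hΓl : HasDerivAt (fun l : ℂ => Γ (l • u)) v 0 := by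
      have e2 : HasFDerivAt Γ (fderiv ℂ Γ 0) ((fun l : ℂ => l • u) 0) := by
        simpa using hs.Γd.self_of_nhds.hasFDerivAt
      exact e2.comp_hasDerivAt 0 hline
    have hR1 : HasDerivAt (fun l : ℂ => (psi Γ (t'.1, thB Θ' (t'.1, l • u))).2) 0 0 := hψ.snd
    have hR2 : HasDerivAt (fun l : ℂ => thB d.Θ ((psi Γ (t'.1, thB Θ' (t'.1, l • u))).1, Γ (l • u)))
        (fderiv ℂ (thB d.Θ) (w, conjCS q) (0, v)) 0 := by
      have e1 : HasDerivAt (fun l : ℂ => ((psi Γ (t'.1, thB Θ' (t'.1, l • u))).1, Γ (l • u))) (0, v) 0 :=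
        hψ.fst.prodMk hΓl
      have e2 : HasFDerivAt (thB d.Θ) (fderiv ℂ (thB d.Θ) (w, conjCS q))
          ((fun l : ℂ => ((psi Γ (t'.1, thB Θ' (t'.1, l • u))).1, Γ (l • u))) 0) := by
        change HasFDerivAt (thB d.Θ) (fderiv ℂ (thB d.Θ) (w, conjCS q))
          ((psi Γ (t'.1, thB Θ' (t'.1, (0 : ℂ) • u))).1, Γ ((0 : ℂ) • u))
        rw [hc0, h1, zero_smul, hs.Γ0]
        exact (hg.diffB.differentiableAt (isOpen_ball.mem_nhds (by
          rw [mem_ball_zero_iff, Prod.norm_mk]; exact max_lt h6 hqn'))).hasFDerivAt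
      exact e2.comp_hasDerivAt 0 e1
    have htend : Tendsto (fun l : ℂ => (((t'.1, thB Θ' (t'.1, l • u)) : CS m), l • u)) (𝓝 0) (𝓝 (t', 0)) := by
      have e1 := hcurve.continuousAt.tendsto
      rw [hc0] at e1
      have e2 := hline.continuousAt.tendsto
      rw [zero_smul] at e2
      exact e1.prodMk_nhds e2
    refine (hR2.unique (hR1.congr_of_eventuallyEq ?_))
    filter_upwards [htend.eventually h3] with l hl
    exact (hl.2 rfl).symm
  -- conclusion
  have hcL : ∀ L, fderiv ℂ (cL d.Θ q.1 L) (conjCS q) v = 0 := by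
    intro L
    rw [(cL_hasFDerivAt hg hwn hqn' L).fderiv]
    change fderiv ℂ (dl (L.map ep) (thB d.Θ)) (q.1, conjCS q) (0, v) = 0
    rw [swap_jet hg hwn hqn']
    exact dl_eq_zero_of_eventually hkey _
  set D := fderiv ℂ G (conjCS q) with hD
  have hGd : HasFDerivAt G D (conjCS q) := hs.Gd.self_of_nhds.hasFDerivAt
  have hDv : D v = u := by
    have e0 : HasFDerivAt G D (Γ 0) := by rw [hs.Γ0]; exact hGd
    have e1 : HasFDerivAt (fun y => G (Γ y)) (D.comp (fderiv ℂ Γ 0)) 0 :=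
      HasFDerivAt.comp 0 e0 hs.Γd.self_of_nhds.hasFDerivAt
    have e2 := (e1.congr_of_eventuallyEq (f₁ := id) (hs.GΓ.mono fun z hz => hz.symm)).unique (hasFDerivAt_id 0)
    exact DFunLike.congr_fun e2 u
  have hcd : ∀ L', HasFDerivAt (cL d.Θ q.1 L') (fderiv ℂ (cL d.Θ q.1 L') (conjCS q)) (conjCS q) := fun L' =>
      (cL_hasFDerivAt hg hwn hqn' L').differentiableAt.hasFDerivAt
  refine Prod.ext (funext fun i => ?_) ?_
  · rw [pr_fst]
    split_ifs with hi
    · have e0 : HasFDerivAt (fun y : CS m => y.1 i) ((ContinuousLinearMap.proj i : (Fin m → ℂ) →L[ℂ] ℂ).comp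
          (ContinuousLinearMap.fst ℂ (Fin m → ℂ) ℂ)) (G (conjCS q)) :=
        ContinuousLinearMap.hasFDerivAt ((ContinuousLinearMap.proj i : (Fin m → ℂ) →L[ℂ] ℂ).comp
          (ContinuousLinearMap.fst ℂ (Fin m → ℂ) ℂ))
      have e1 : HasFDerivAt (fun y => (G y).1 i) (((ContinuousLinearMap.proj i : (Fin m → ℂ) →L[ℂ] ℂ).comp
          (ContinuousLinearMap.fst ℂ (Fin m → ℂ) ℂ)).comp D) (conjCS q) :=
        HasFDerivAt.comp (conjCS q) e0 hGd
      simp only [hs.G1 _ i hi] at e1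
      have := DFunLike.congr_fun (e1.unique ((hcd (σ i)).sub_const _)) v
      rw [hcL] at this
      rw [← hDv]; exact this
    · rfl
  · have e1 : HasFDerivAt (fun y => (G y).2) ((ContinuousLinearMap.snd ℂ _ _).comp D) (conjCS q) :=
        HasFDerivAt.comp (conjCS q) hasFDerivAt_snd hGd
    simp only [hs.G2] at e1
    have := DFunLike.congr_fun (e1.unique ((hcd []).sub_const _)) v
    rw [hcL] at this
    rw [← hDv]; exact this

end Nondeg

section Fin
variable {m : ℕ} {M : Set (CS m)} {d : DefData m} {q : CS m}
variable {χ k₀ : ℕ} {G Γ : CS m → CS m} {σ : Fin m → List (Fin m)}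

/-- Stabilisation of the kernels. -/
lemma inj_of_all {a : ℕ} {Θ : (Fin a → ℕ) → CS a → ℂ} {R C : ℝ} (h : Good Θ R C)
    (h0 : ThetaSum Θ 0 0 = 0)
    (hall : ∀ u : CS a, (∀ L : List (Fin a), fderiv ℂ (dl (L.map ep) (thB Θ)) (0, 0) (0, u) = 0) → u = 0) :
    ∃ k, Function.Injective ⇑(fderiv ℂ (segreJetMap Θ k) ((0 : CS a), (0 : Fin a → ℂ))) := by
  let A : (Fin a → ℂ) →ₗ[ℂ] (Fin a → ℂ) × CS a :=
    { toFun := fun x => (0, (x, fderiv ℂ (thS Θ) (0, 0) (x, 0)))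
      map_add' := by
        intro x y
        have : ((x + y, 0) : (Fin a → ℂ) × CS a) = (x, 0) + (y, 0) := by simp
        rw [this, map_add]; simp
      map_smul' := by
        intro c x
        have : ((c • x, 0) : (Fin a → ℂ) × CS a) = c • (x, 0) := by simp
        rw [this, map_smul]; simp }
  let N : ℕ → Submodule ℂ (Fin a → ℂ) := fun k => ⨅ L : {L : List (Fin a) // L.length ≤ k},
    LinearMap.ker ((fderiv ℂ (dl (L.1.map ep) (thB Θ)) (0, 0)).toLinearMap.comp A)
  have hN : ∀ k x, x ∈ N k ↔ ∀ L : List (Fin a), L.length ≤ k →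
      fderiv ℂ (dl (L.map ep) (thB Θ)) (0, 0) (A x) = 0 := by
    intro k x
    simp [N, Submodule.mem_iInf]
  have hanti : Antitone N := by
    intro k l hkl x hx
    rw [hN] at *
    exact fun L hL => hx L (hL.trans hkl)
  obtain ⟨n, hn⟩ := IsArtinian.monotone_stabilizes (R := ℂ) (M := Fin a → ℂ)
    ⟨fun k => OrderDual.toDual (N k), fun k l hkl => hanti hkl⟩
  refine ⟨n, ?_⟩
  rw [injective_iff_map_eq_zero]
  intro v hv
  have hR := h.1
  have hk := (jet_ker h n (0, 0) (by simpa using hR) (by simpa using hR) (by simpa [h0] using hR) v).1 hv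
  simp only [h0] at hk
  have hvn : v.2 ∈ N n := (hN n v.2).2 hk.2
  have hvall : ∀ L : List (Fin a), fderiv ℂ (dl (L.map ep) (thB Θ)) (0, 0) (A v.2) = 0 := by
    intro L
    have e : N n = N (max n L.length) := hn (max n L.length) (le_max_left _ _)
    rw [e] at hvn
    exact (hN _ _).1 hvn L (le_max_right _ _)
  have := hall _ hvall
  exact Prod.ext hk.1 (congrArg Prod.fst this)

lemma nondeg (hM : IsRealAnalyticHypersurface M) (hd : d.IsDefiningSeriesOf M) (hq : q ∈ M)
    (hqb : q ∈ ball (0 : CS m) d.r) (hs : StrData d q χ G Γ σ) (hχ : χ ≤ m)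
    {Θ' : (Fin m → ℕ) → CS m → ℂ}
    {R C : ℝ} (hg' : Good Θ' R C) (hN : NormalFormSeries χ Θ') (h00 : Θ' 0 0 = 0)
    (hrel : ∀ᶠ x : CS m × CS m in 𝓝 0, (SRel d Γ x.1 x.2 ↔ x.2.2 = thS Θ' (x.2.1, x.1))) :
    ∃ k, Function.Injective ⇑(fderiv ℂ (segreJetMap (reducedSeries m χ Θ') k)
      ((0 : CS χ), (0 : Fin χ → ℂ))) := by
  have hgr := good_reduced hχ hg'
  have hR := hg'.1
  refine inj_of_all hgr ?_ ?_
  · have := thetaSum_reduced hχ hN 0 0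
    rw [map_zero, map_zero, thetaSum_zero Θ' 0, h00] at this
    exact this.symm
  · intro u hu
    -- vanishing of the differential along the Segre variety
    have hz : ∀ w ∈ ball (0 : Fin χ → ℂ) R, fderiv ℂ (thB (reducedSeries m χ Θ')) (w, 0) (0, u) = 0 := by
      refine eq_zero_of_dl_basis (fun i : Fin χ => (Pi.single i 1 : Fin χ → ℂ)) span_single hR
        (f := fun w => fderiv ℂ (thB (reducedSeries m χ Θ')) (w, 0) (0, u)) ?_ ?_
      · have h1 := dl_diff isOpen_ball hgr.diffB [((0 : Fin χ → ℂ), u)]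
        refine DifferentiableOn.comp (t := ball (0 : (Fin χ → ℂ) × CS χ) R)
          (g := dl [((0 : Fin χ → ℂ), u)] (thB (reducedSeries m χ Θ')))
          (f := fun w : Fin χ → ℂ => (w, (0 : CS χ))) h1 (by fun_prop) ?_
        intro w hw
        rw [mem_ball_zero_iff] at *
        rw [Prod.norm_mk, norm_zero]
        exact max_lt hw hR
      · intro L
        rw [← swap_jet hgr (by simpa using hR) (by simpa using hR)]
        exact hu L
    have hpr := nondeg_core hM hd hq hqb hs hg' hrel (embedCS m χ u) (by
      have hcont : Tendsto (resW hχ) (𝓝 0) (𝓝 0) := by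
        have := (resW hχ).continuous.tendsto 0
        rwa [map_zero] at this
      filter_upwards [hcont.eventually (ball_mem_nhds _ hR)] with w hw
      have e : thB Θ' = fun p => thB (reducedSeries m χ Θ') ((resW hχ).prodMap (resC hχ) p) :=
        funext fun p => thB_reduced hχ hN p
      have e1 : HasFDerivAt (thB (reducedSeries m χ Θ'))
          (fderiv ℂ (thB (reducedSeries m χ Θ')) (resW hχ w, 0)) ((resW hχ).prodMap (resC hχ) (w, 0)) := by
        have : (resW hχ).prodMap (resC hχ) (w, 0) = (resW hχ w, 0) := by
          change (resW hχ w, resC hχ 0) = _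
          rw [map_zero]
        rw [this]
        refine (hgr.diffB.differentiableAt (isOpen_ball.mem_nhds ?_)).hasFDerivAt
        rw [mem_ball_zero_iff, Prod.norm_mk, norm_zero]
        exact max_lt (mem_ball_zero_iff.1 hw) hR
      have e2 := HasFDerivAt.comp (w, (0 : CS m)) e1 ((resW hχ).prodMap (resC hχ)).hasFDerivAt
      have e3 : fderiv ℂ (thB Θ') (w, (0 : CS m)) = (fderiv ℂ (thB (reducedSeries m χ Θ')) (resW hχ w, 0)).comp ((resW hχ).prodMap (resC hχ)) := by
        rw [e]; exact e2.fderiv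
      rw [e3]
      change fderiv ℂ (thB (reducedSeries m χ Θ')) (resW hχ w, 0) (resW hχ 0, resC hχ (embedCS m χ u)) = 0
      rw [map_zero, resC_embed]
      exact hz _ hw)
    have hres : ∀ y : CS m, resC hχ (pr m χ y) = resC hχ y := by
      intro y
      refine Prod.ext (funext fun i => ?_) rfl
      change (pr m χ y).1 (Fin.castLE hχ i) = _
      rw [pr_fst, if_pos (by simp)]
      rfl
    rw [← resC_embed hχ u, ← hres, hpr, map_zero]

end Fin

lemma mem_iff_srel {m : ℕ} {M : Set (CS m)} {d : DefData m} (hd : d.IsDefiningSeriesOf M)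
    (Γ : CS m → CS m) (t : CS m) (ht : psi Γ t ∈ ball (0 : CS m) d.r) :
    psi Γ t ∈ M ↔ SRel d Γ t (conjCS t) := by
  rw [hd.2.2.2.2.2 _ ht]
  unfold SRel
  rw [Γ_conj Γ]
  change _ ↔ (psi Γ t).2 = ThetaBar d.Θ (psi Γ t).1 (conjCS (psi Γ t))
  rw [thetaBar_eq, conjCS_conjCS, ← (RingHom.injective (starRingEnd ℂ)).eq_iff, Complex.conj_conj]

theorem normal_form_at_locally_constant_rank_point
    (m : ℕ) (hm : 1 ≤ m) (M' : Set (CS m))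
    (hM' : IsRealAnalyticHypersurface M')
    (d : DefData m) (hd : d.IsDefiningSeriesOf M')
    (χ κ : ℕ) (hχ : χ ≤ m) (hκ : κ = m - χ)
    (k₀ : ℕ) (hgen : ∀ k ≥ k₀, SegreGenericRank d.Θ d.r k (m + 1 + χ))
    (q' : CS m) (hq' : q' ∈ M') (hq'ball : q' ∈ ball (0 : CS m) d.r)
    (hconst : ∀ k ≥ k₀, SegreConstRankNear d.Θ k (m + 1 + χ) q') :
    ∃ (U V : Set (CS m)) (Φ Ψ : CS m → CS m),
      IsOpen U ∧ q' ∈ U ∧ IsOpen V ∧ (0 : CS m) ∈ V ∧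
      DifferentiableOn ℂ Φ U ∧ DifferentiableOn ℂ Ψ V ∧
      Set.MapsTo Φ U V ∧ Set.MapsTo Ψ V U ∧
      (∀ z ∈ U, Ψ (Φ z) = z) ∧ (∀ z ∈ V, Φ (Ψ z) = z) ∧ Φ q' = 0 ∧
      ∃ d' : DefData m, d'.IsDefiningSeriesOf (Φ '' (M' ∩ U)) ∧
        NormalFormSeries χ d'.Θ ∧
        ∃ k : ℕ, Function.Injective
          ⇑(fderiv ℂ (segreJetMap (reducedSeries m χ d'.Θ) k)
            ((0 : CS χ), (0 : Fin χ → ℂ))) := by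
  obtain ⟨G, Γ, σ, hs, hσ⟩ := exists_str hM' hd hq' hq'ball hχ (hconst k₀ le_rfl)
  obtain ⟨T, hT0, hTd, hTrel, hTi⟩ := exists_theta hM' hd hq' hq'ball hs hσ hχ hconst
  have hcq := (continuous_conjCS (m := m)).tendsto q'
  have hΦ0 : psi G q' = 0 := by
    unfold psi
    rw [hs.G0, conj_zero]
  have hΦd : ∀ᶠ t in 𝓝 q', DifferentiableAt ℂ (psi G) t := by
    filter_upwards [hcq.eventually hs.Gd] with t ht
    exact diffAt_star_star ht
  have hΨΦ : ∀ᶠ t in 𝓝 q', psi Γ (psi G t) = t := by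
    filter_upwards [hcq.eventually hs.ΓG] with t ht
    simp [psi, ht]
  have hΦΨ : ∀ᶠ t in 𝓝 (0 : CS m), psi G (psi Γ t) = t := by
    filter_upwards [conj_tendsto_zero.eventually hs.GΓ] with t ht
    simp [psi, ht]
  obtain ⟨ρ₁, hρ₁, hU0⟩ := Metric.eventually_nhds_iff_ball.1
    (hΦd.and (hΨΦ.and (isOpen_ball.mem_nhds hq'ball)))
  obtain ⟨ρ₂, hρ₂, hV0⟩ := Metric.eventually_nhds_iff_ball.1 (hs.psi_diff.and hΦΨ)
  set U := ball q' ρ₁ ∩ psi G ⁻¹' ball 0 ρ₂ with hU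
  set V := ball 0 ρ₂ ∩ psi Γ ⁻¹' ball q' ρ₁ with hV
  have hΦdU : DifferentiableOn ℂ (psi G) (ball q' ρ₁) := fun t ht => (hU0 t ht).1.differentiableWithinAt
  have hΨdV : DifferentiableOn ℂ (psi Γ) (ball 0 ρ₂) := fun t ht => (hV0 t ht).1.differentiableWithinAt
  have hUo : IsOpen U := hΦdU.continuousOn.isOpen_inter_preimage isOpen_ball isOpen_ball
  have hVo : IsOpen V := hΨdV.continuousOn.isOpen_inter_preimage isOpen_ball isOpen_ball
  have hqU : q' ∈ U := ⟨mem_ball_self hρ₁, by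
    change psi G q' ∈ ball (0 : CS m) ρ₂
    rw [hΦ0]; exact mem_ball_self hρ₂⟩
  have h0V : (0 : CS m) ∈ V := ⟨mem_ball_self hρ₂, by
    change psi Γ 0 ∈ ball q' ρ₁
    rw [hs.psi0]; exact mem_ball_self hρ₁⟩
  have hmapsU : MapsTo (psi G) U V := fun x hx => ⟨hx.2, by
    change psi Γ (psi G x) ∈ ball q' ρ₁
    rw [(hU0 x hx.1).2.1]; exact hx.1⟩
  have hmapsV : MapsTo (psi Γ) V U := fun y hy => ⟨hy.2, by
    change psi G (psi Γ y) ∈ ball (0 : CS m) ρ₂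
    rw [(hV0 y hy.1).2]; exact hy.1⟩
  have hdiag : Tendsto (fun t : CS m => (t, conjCS t)) (𝓝 0) (𝓝 0) :=
    tendsto_id.prodMk_nhds conj_tendsto_zero
  obtain ⟨ρ, hρ, hρb⟩ := Metric.eventually_nhds_iff_ball.1
    ((hdiag.eventually hTrel).and (hVo.mem_nhds h0V))
  obtain ⟨Θ', r, hrρ, hg', h00, hNF, hsum⟩ := exists_data hT0 hTd hTi hρ
  have h2r := hg'.1
  have hr : 0 < r := by linarith
  refine ⟨U, V, psi G, psi Γ, hUo, hqU, hVo, h0V, hΦdU.mono inter_subset_left,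
    hΨdV.mono inter_subset_left, hmapsU, hmapsV, fun z hz => (hU0 z hz.1).2.1,
    fun z hz => (hV0 z hz.1).2, hΦ0, ⟨Θ', r, 1⟩,
    ⟨hr, one_pos, hg'.2.1, hg'.2.2, h00, fun t ht => ?_⟩, hNF, ?_⟩
  · obtain ⟨h1, h2⟩ := hρb t (ball_subset_ball hrρ ht)
    have htn := mem_ball_zero_iff.1 ht
    have hm1 : t ∈ psi G '' (M' ∩ U) ↔ psi Γ t ∈ M' := by
      constructor
      · rintro ⟨x, ⟨hx, hxU⟩, rfl⟩
        rwa [(hU0 x hxU.1).2.1]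
      · intro h
        exact ⟨psi Γ t, ⟨h, hmapsV h2⟩, (hV0 t h2.1).2⟩
    rw [hm1, mem_iff_srel hd Γ t (hU0 _ h2.2).2.2, h1]
    change starRingEnd ℂ t.2 = T (conjW t.1, t) ↔ starRingEnd ℂ t.2 = ThetaSum Θ' (conjW t.1) t
    rw [hsum _ ?_ _ ?_]
    · rw [mem_ball_zero_iff, norm_conjW]
      have := norm_fst_le t
      linarith
    · rw [mem_ball_zero_iff]; linarith
  · refine nondeg hM' hd hq' hq'ball hs hχ hg' hNF h00 ?_
    have hb : ball (0 : CS m × CS m) (2 * r) ∈ 𝓝 0 := ball_mem_nhds _ h2r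
    filter_upwards [hTrel, hb] with x h1 h2
    rw [mem_ball_zero_iff] at h2
    rw [h1]
    change _ ↔ x.2.2 = ThetaSum Θ' x.2.1 x.1
    rw [hsum _ ?_ _ ?_]
    · rw [mem_ball_zero_iff]
      exact ((norm_fst_le _).trans (norm_snd_le x)).trans_lt h2
    · rw [mem_ball_zero_iff]
      exact (norm_fst_le x).trans_lt h2
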